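/- arXiv:2502.02925 — 4 statements merged into one kernel-verified Lean document; each statement's English description precedes it below -/
import Mathlib

section
/- Let ν ∈ P_2(ℝ^d), let D ⊂ P_2(ℝ^d), and suppose there exists μ ∈ D minimizing W_2²(·, ν) over D and an optimal coupling π ∈ Π(μ,ν) attaining W_2²(μ,ν) such that the π-conditional barycentrically recentered measure (c_π)_#μ belongs to D, where c_π(x) = ∫ y dπ_x(y) is the conditional barycenter map of the disintegration π = μ ⊗ π_x. Then (c_π)_#μ is optimal both for the relaxed problem min_{μ∈D} W_2²(μ,ν) and for the self-consistency problem min_{μ∈D} min_{π∈M(μ,ν)} ∫|x−y|² dπ(x,y), and consequently the two problems have the same optimal value. -/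
/-!
Write `c = c_π` and let `γ` be the image of `π` under `(x, y) ↦ (c x, y)`. Disintegrating `π` shows
that `γ` is a martingale coupling of `c_#μ` and `ν`, because averaging `y` over the event `c x ∈ B`
amounts to averaging `c x` over it (`isMartingaleCoupling_recenter`). Since the mean of a measure
minimizes the mean squared distance to it, applied to each fibre `π_x`, the cost of `γ` is at most
that of `π` (`cost_recenter_le`). Hence

`W₂²(c_#μ, ν) ≤ cost γ ≤ cost π = W₂²(μ, ν) ≤ W₂²(ρ, ν)` for every `ρ ∈ D`.

Taking `ρ = c_#μ` forces equality in the first three relations, and `W₂²(ρ, ν)` is in turn at most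
the cost of any (martingale) coupling of `ρ` and `ν`.
-/

open MeasureTheory Filter
open scoped RealInnerProductSpace Topology

noncomputable section

/-- `Rd d` is the Euclidean space `ℝ^d`. -/
abbrev Rd (d : ℕ) := EuclideanSpace ℝ (Fin d)

/-- A measure has finite second moment if `x ↦ ‖x‖²` is integrable. -/
def FiniteSecondMoment {d : ℕ} (μ : Measure (Rd d)) : Prop :=
  Integrable (fun x => ‖x‖ ^ 2) μ

/-- `π` is a coupling of `μ` and `ν` if its marginals are `μ` and `ν`. -/
def IsCoupling {d : ℕ} (π : Measure (Rd d × Rd d)) (μ ν : Measure (Rd d)) : Prop :=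
  π.map Prod.fst = μ ∧ π.map Prod.snd = ν

/-- The squared 2-Wasserstein distance: `W₂²(μ,ν) = inf_{π ∈ Π(μ,ν)} ∫ |x-y|² dπ`. -/
def W2sq {d : ℕ} (μ ν : Measure (Rd d)) : ℝ :=
  sInf ((fun π : Measure (Rd d × Rd d) => ∫ p, ‖p.1 - p.2‖ ^ 2 ∂π) ''
    {π | IsCoupling π μ ν})

/-- The 2-Wasserstein distance. -/
def W2 {d : ℕ} (μ ν : Measure (Rd d)) : ℝ := Real.sqrt (W2sq μ ν)

/-- The variance of a measure: `Var(μ) = ∫ |x - ∫ x dμ|² dμ(x)`. -/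
def Var {d : ℕ} (μ : Measure (Rd d)) : ℝ := ∫ x, ‖x - ∫ y, y ∂μ‖ ^ 2 ∂μ

/-- Convex order: `μ ≤_c ν` iff `∫ f dμ ≤ ∫ f dν` for every (integrable) convex `f`. -/
def ConvexOrder {d : ℕ} (μ ν : Measure (Rd d)) : Prop :=
  ∀ f : Rd d → ℝ, ConvexOn ℝ Set.univ f → Integrable f μ → Integrable f ν →
    ∫ x, f x ∂μ ≤ ∫ x, f x ∂ν

/-- Kantorovich dominance: `μ ≼_K ν` iff there is a coupling `π` of `μ` and `ν` with
`∫ ⟨x - b_ν, y - x⟩ dπ = 0`, where `b_ν` is the barycenter of `ν`. -/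
def KDom {d : ℕ} (μ ν : Measure (Rd d)) : Prop :=
  ∃ π : Measure (Rd d × Rd d), IsCoupling π μ ν ∧
    (∫ p : Rd d × Rd d, ⟪p.1 - ∫ y, y ∂ν, p.2 - p.1⟫ ∂π) = 0

/-- A martingale coupling of `μ` and `ν`: a coupling `π` with `E_π[Y|X] = X`, the conditional
expectation being taken with respect to the σ-algebra generated by the first coordinate. -/
def IsMartingaleCoupling {d : ℕ} (π : Measure (Rd d × Rd d)) (μ ν : Measure (Rd d)) : Prop :=
  IsCoupling π μ ν ∧
    (π[fun p : Rd d × Rd d => p.2 |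
        MeasurableSpace.comap (Prod.fst : Rd d × Rd d → Rd d) inferInstance])
      =ᵐ[π] fun p => p.1

/-- The `π`-conditional barycentric map `c_π(x) = ∫ y dπ_x(y)`, where `π = μ ⊗ π_x` is the
disintegration of `π` with respect to its first marginal. -/
def condBary {d : ℕ} (π : Measure (Rd d × Rd d)) [IsFiniteMeasure π] (x : Rd d) : Rd d :=
  ∫ y, y ∂(π.condKernel x)

lemma W2sq_le_cost {d : ℕ} {μ ν : Measure (Rd d)} {π : Measure (Rd d × Rd d)}
    (hπ : IsCoupling π μ ν) : W2sq μ ν ≤ ∫ p, ‖p.1 - p.2‖ ^ 2 ∂π := by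
  refine csInf_le ⟨0, ?_⟩ ⟨π, hπ, rfl⟩
  rintro _ ⟨σ, -, rfl⟩
  exact integral_nonneg fun p => by positivity

lemma measurable_condBary {d : ℕ} (π : Measure (Rd d × Rd d)) [IsFiniteMeasure π] :
    Measurable (condBary π) := by
  have h : StronglyMeasurable fun p : Rd d × Rd d => p.2 := measurable_snd.stronglyMeasurable
  exact (h.integral_kernel_prod_right' (κ := π.condKernel)).measurable

lemma FiniteSecondMoment.memLp {d : ℕ} {μ : Measure (Rd d)} (h : FiniteSecondMoment μ) :
    MemLp (fun x => x) 2 μ :=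
  (memLp_two_iff_integrable_sq_norm aestronglyMeasurable_id).2 h

/-- The mean of a probability measure minimizes the mean squared distance to it. -/
lemma integral_sq_dist_mean_le {d : ℕ} (κ : Measure (Rd d)) [IsProbabilityMeasure κ] (x : Rd d)
    (h1 : Integrable (fun y => y) κ) (hx : Integrable (fun y => ‖x - y‖ ^ 2) κ)
    (hc : Integrable (fun y => ‖(∫ z, z ∂κ) - y‖ ^ 2) κ) :
    ∫ y, ‖(∫ z, z ∂κ) - y‖ ^ 2 ∂κ ≤ ∫ y, ‖x - y‖ ^ 2 ∂κ := by
  set c := ∫ z, z ∂κ with hcdef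
  have hsub : Integrable (fun y => c - y) κ := (integrable_const c).sub h1
  have hin : Integrable (fun y => 2 * ⟪x - c, c - y⟫) κ := (hsub.const_inner (x - c)).const_mul 2
  have hzero : ∫ y, 2 * ⟪x - c, c - y⟫ ∂κ = 0 := by
    rw [integral_const_mul, integral_inner hsub, integral_sub (integrable_const c) h1]
    simp [← hcdef]
  calc ∫ y, ‖c - y‖ ^ 2 ∂κ = ∫ y, (‖c - y‖ ^ 2 + 2 * ⟪x - c, c - y⟫) ∂κ := by
        rw [integral_add hc hin, hzero, add_zero]
    _ ≤ ∫ y, ‖x - y‖ ^ 2 ∂κ := by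
        refine integral_mono (hc.add hin) hx fun y => ?_
        have h := norm_add_sq_real (x - c) (c - y)
        rw [sub_add_sub_cancel] at h
        have := sq_nonneg ‖x - c‖
        simp only
        linarith

/-- Recentering each fibre of `π` at its mean does not increase the quadratic cost. -/
lemma cost_recenter_le {d : ℕ} (π : Measure (Rd d × Rd d)) [IsFiniteMeasure π]
    (h1 : MemLp (fun p : Rd d × Rd d => p.1) 2 π)
    (h2 : MemLp (fun p : Rd d × Rd d => p.2) 2 π)
    (hc : MemLp (fun p : Rd d × Rd d => condBary π p.1) 2 π) :
    ∫ p, ‖condBary π p.1 - p.2‖ ^ 2 ∂π ≤ ∫ p, ‖p.1 - p.2‖ ^ 2 ∂π := by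
  have hx := (h1.sub h2).integrable_norm_pow two_ne_zero
  have hb := (hc.sub h2).integrable_norm_pow two_ne_zero
  simp only [Pi.sub_apply] at hx hb
  rw [← Measure.integral_condKernel hx, ← Measure.integral_condKernel hb]
  refine integral_mono_ae hb.integral_condKernel hx.integral_condKernel ?_
  filter_upwards [hx.condKernel_ae, hb.condKernel_ae, (h2.integrable one_le_two).condKernel_ae]
    with x hx' hb' h2'
  exact integral_sq_dist_mean_le (π.condKernel x) x h2' hx' hb'

lemma isMartingaleCoupling_recenter {d : ℕ} {μ ν : Measure (Rd d)} (π : Measure (Rd d × Rd d))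
    [IsFiniteMeasure π] (hπ : IsCoupling π μ ν)
    (h2 : Integrable (fun p : Rd d × Rd d => p.2) π) :
    IsMartingaleCoupling (π.map fun p => (condBary π p.1, p.2)) (μ.map (condBary π)) ν := by
  have hcm := measurable_condBary π
  have hT : Measurable fun p : Rd d × Rd d => (condBary π p.1, p.2) := by fun_prop
  have hfst : π.fst = μ := hπ.1
  have hcμ : Integrable (condBary π) π.fst := h2.integral_condKernel
  have hcπ : Integrable (fun p : Rd d × Rd d => condBary π p.1) π :=
    hcμ.comp_measurable measurable_fst
  refine ⟨⟨?_, ?_⟩, ?_⟩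
  · rw [Measure.map_map measurable_fst hT, ← hπ.1, Measure.map_map hcm measurable_fst]
    rfl
  · rw [Measure.map_map measurable_snd hT, ← hπ.2]
    rfl
  have hm : MeasurableSpace.comap (Prod.fst : Rd d × Rd d → Rd d) inferInstance
      ≤ (inferInstance : MeasurableSpace (Rd d × Rd d)) := measurable_fst.comap_le
  have hγ2 : Integrable (fun p : Rd d × Rd d => p.2) (π.map fun p => (condBary π p.1, p.2)) :=
    (integrable_map_measure measurable_snd.aestronglyMeasurable hT.aemeasurable).2 h2
  have hγ1 : Integrable (fun p : Rd d × Rd d => p.1) (π.map fun p => (condBary π p.1, p.2)) :=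
    (integrable_map_measure measurable_fst.aestronglyMeasurable hT.aemeasurable).2 hcπ
  refine (ae_eq_condExp_of_forall_setIntegral_eq hm hγ2 (fun _ _ _ => hγ1.integrableOn) ?_
    (comap_measurable _).stronglyMeasurable.aestronglyMeasurable).symm
  rintro _ ⟨B, hB, rfl⟩ -
  have hA : MeasurableSet (condBary π ⁻¹' B) := hcm hB
  have hpre : (fun p : Rd d × Rd d => (condBary π p.1, p.2)) ⁻¹' (Prod.fst ⁻¹' B)
      = (condBary π ⁻¹' B) ×ˢ Set.univ := by
    ext p; simp
  rw [setIntegral_map (measurable_fst hB) measurable_fst.aestronglyMeasurable hT.aemeasurable,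
    setIntegral_map (measurable_fst hB) measurable_snd.aestronglyMeasurable hT.aemeasurable, hpre,
    ← Measure.setIntegral_condKernel_univ_right hA h2.integrableOn,
    ← Measure.setIntegral_condKernel_univ_right hA hcπ.integrableOn]
  simp [condBary]

/-- If `μ ∈ D` minimizes `W₂²(·,ν)` over `D`, `π` is an optimal coupling attaining `W₂²(μ,ν)`,
and the recentered measure `(c_π)_#μ` belongs to `D`, then `(c_π)_#μ` is optimal for the
relaxed problem and for the self-consistency (martingale) problem, whose optimal values agree. -/
theorem stmt_1 {d : ℕ} (ν : Measure (Rd d)) [IsProbabilityMeasure ν]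
    (hν2 : FiniteSecondMoment ν)
    (D : Set (Measure (Rd d)))
    (hD : ∀ ρ ∈ D, IsProbabilityMeasure ρ ∧ FiniteSecondMoment ρ)
    (μ : Measure (Rd d)) (hμD : μ ∈ D)
    (hμopt : ∀ ρ ∈ D, W2sq μ ν ≤ W2sq ρ ν)
    (π : Measure (Rd d × Rd d)) [IsFiniteMeasure π]
    (hπ : IsCoupling π μ ν)
    (hπopt : (∫ p : Rd d × Rd d, ‖p.1 - p.2‖ ^ 2 ∂π) = W2sq μ ν)
    (hrecenter : μ.map (condBary π) ∈ D) :
    (∀ ρ ∈ D, W2sq (μ.map (condBary π)) ν ≤ W2sq ρ ν) ∧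
      ∃ γ : Measure (Rd d × Rd d), IsMartingaleCoupling γ (μ.map (condBary π)) ν ∧
        (∫ p : Rd d × Rd d, ‖p.1 - p.2‖ ^ 2 ∂γ) = W2sq (μ.map (condBary π)) ν ∧
        ∀ ρ ∈ D, ∀ σ : Measure (Rd d × Rd d), IsMartingaleCoupling σ ρ ν →
          (∫ p : Rd d × Rd d, ‖p.1 - p.2‖ ^ 2 ∂γ) ≤ ∫ p : Rd d × Rd d, ‖p.1 - p.2‖ ^ 2 ∂σ := by
  have hcm := measurable_condBary π
  have hT : Measurable fun p : Rd d × Rd d => (condBary π p.1, p.2) := by fun_prop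
  have h1 : MemLp (fun p : Rd d × Rd d => p.1) 2 π := by
    have := (hD μ hμD).2.memLp
    rw [← hπ.1] at this
    exact this.comp_of_map measurable_fst.aemeasurable
  have h2 : MemLp (fun p : Rd d × Rd d => p.2) 2 π := by
    have := hν2.memLp
    rw [← hπ.2] at this
    exact this.comp_of_map measurable_snd.aemeasurable
  have hc : MemLp (fun p : Rd d × Rd d => condBary π p.1) 2 π := by
    have := (hD _ hrecenter).2.memLp
    rw [← hπ.1, Measure.map_map hcm measurable_fst] at this
    exact this.comp_of_map (hcm.comp measurable_fst).aemeasurable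
  have hM := isMartingaleCoupling_recenter π hπ (h2.integrable one_le_two)
  have hcost : ∫ p, ‖p.1 - p.2‖ ^ 2 ∂(π.map fun p => (condBary π p.1, p.2)) ≤ W2sq μ ν := by
    rw [integral_map hT.aemeasurable (by fun_prop), ← hπopt]
    exact cost_recenter_le π h1 h2 hc
  have hlow := W2sq_le_cost hM.1
  have hmin := hμopt _ hrecenter
  exact ⟨fun ρ hρ => (hlow.trans hcost).trans (hμopt ρ hρ), _, hM,
    le_antisymm (hcost.trans hmin) hlow,
    fun ρ hρ σ hσ => (hcost.trans (hμopt ρ hρ)).trans (W2sq_le_cost hσ.1)⟩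
end
end

section
/- For any ν ∈ P_2(ℝ^d), the set M_ν := {μ ∈ P_2(ℝ^d) : μ ≤_c ν} of probability measures dominated by ν in convex order is compact with respect to the 2-Wasserstein metric W_2. -/
/-!
The tails of the second moments of all `μ ≤_c ν` are controlled by those of `ν`: the function
`4 (‖x‖ - R)₊²` (`tailSq`) is convex, dominates `‖x‖²` outside the ball of radius `2R`, and its
`ν`-integral tends to `0` as `R → ∞`. Hence the sequence is tight, and Prokhorov's theorem gives a
weakly convergent subsequence; by Fatou's lemma the limit has finite second moment.

Weak convergence with uniformly small second-moment tails implies `W₂`-convergence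
(`tendsto_W2_of_tendsto`). The proof constructs couplings directly: for a finite continuous
partition of unity with small cells, apart from one near infinity, the masses of the cells
converge, so almost all of the limit can be coupled with the approximating measure inside the cells
(`exists_partial_coupling`), and the small rest is coupled independently.

The limit is again dominated by `ν` (`convexOrder_of_tendsto`). A convex `f` is an increasing limit
of maxima of finitely many affine functions. Such a maximum `g` has linear growth, so
`g + s ‖x‖²` is convex, of quadratic growth and bounded below for `s > 0`; Fatou's lemma gives the
inequality for it, and one lets `s → 0` and then `g ↑ f`.
-/

open MeasureTheory Filter
open scoped RealInnerProductSpace Topology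

noncomputable section

/-! ### Coupling along a partition of unity -/

/-- Coupling along a partition of unity `ψ`. If every cell carries at least `t` times as much
mass under `μ'` as under `μ`, then `μ'` and `μ` have a coupling `π₁ + π₂` where `π₁` only pairs
points lying in a common cell, and `π₂` has mass `1 - t`. With `a i`, `b i` the masses of the cell
`i` under `μ'` and `μ`, one takes
`π₁ = ∑ i, (t / a i) • (ψ i μ' ⊗ ψ i μ)`, whose second marginal is `t μ`, and `π₂ = ρ ⊗ μ`, where
`ρ` is what `π₁` leaves over of `μ'`. -/
theorem exists_partial_coupling {E ι : Type*} [MeasurableSpace E] [Fintype ι]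
    (μ' μ : Measure E) [IsProbabilityMeasure μ'] [IsProbabilityMeasure μ]
    (ψ : ι → E → ENNReal) (hψ : ∀ i, Measurable (ψ i)) (hsum : ∀ x, ∑ i, ψ i x = 1)
    (t : ENNReal) (ht0 : t ≠ 0) (ht1 : t ≤ 1)
    (h : ∀ i, t * ∫⁻ x, ψ i x ∂μ ≤ ∫⁻ x, ψ i x ∂μ') :
    ∃ π₁ π₂ : Measure (E × E), (π₁ + π₂).map Prod.fst = μ' ∧ (π₁ + π₂).map Prod.snd = μ ∧
      π₂ Set.univ = 1 - t ∧
      ∀ P : E × E → Prop, MeasurableSet {p | P p} →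
        (∀ i x y, ψ i x ≠ 0 → ψ i y ≠ 0 → P (x, y)) → ∀ᵐ p ∂π₁, P p := by
  classical
  have htop : t ≠ ⊤ := ne_top_of_le_ne_top ENNReal.one_ne_top ht1
  set a : ι → ENNReal := fun i => ∫⁻ x, ψ i x ∂μ' with ha
  set b : ι → ENNReal := fun i => ∫⁻ x, ψ i x ∂μ with hb
  have hle1 : ∀ i x, ψ i x ≤ 1 := fun i x => by
    rw [← hsum x]
    exact Finset.single_le_sum (f := fun i => ψ i x) (fun _ _ => zero_le) (Finset.mem_univ i)
  have ha1 : ∀ i, a i ≤ 1 := fun i => by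
    simpa using lintegral_mono (μ := μ') (hle1 i)
  have hb1 : ∀ i, b i ≤ 1 := fun i => by
    simpa using lintegral_mono (μ := μ) (hle1 i)
  have hatop : ∀ i, a i ≠ ⊤ := fun i => ne_top_of_le_ne_top ENNReal.one_ne_top (ha1 i)
  have hbtop : ∀ i, b i ≠ ⊤ := fun i => ne_top_of_le_ne_top ENNReal.one_ne_top (hb1 i)
  have hab : ∀ i, a i = 0 → b i = 0 := fun i hi => by
    have := h i
    change t * b i ≤ a i at this
    rw [hi, nonpos_iff_eq_zero, mul_eq_zero] at this
    exact this.resolve_left ht0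
  set α : ι → Measure E := fun i => μ'.withDensity (ψ i) with hα
  set β : ι → Measure E := fun i => μ.withDensity (ψ i) with hβ
  have hαu : ∀ i, α i Set.univ = a i := fun i => by simp [hα, ha, withDensity_apply]
  have hβu : ∀ i, β i Set.univ = b i := fun i => by simp [hβ, hb, withDensity_apply]
  have : ∀ i, IsFiniteMeasure (α i) := fun i => ⟨by rw [hαu]; exact (hatop i).lt_top⟩
  have : ∀ i, IsFiniteMeasure (β i) := fun i => ⟨by rw [hβu]; exact (hbtop i).lt_top⟩
  -- `w i` is the proportion of the cell `i` of `μ'` that `π₁` uses up; an empty cell (`a i = 0`)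
  -- has `b i = 0` as well, so the division by zero is harmless.
  set w : ι → ENNReal := fun i => t / a i * b i with hw
  have hw1 : ∀ i, w i ≤ 1 := fun i => by
    have h1 : t * b i ≤ a i := h i
    rw [hw]; dsimp only
    rw [div_eq_mul_inv, mul_right_comm, ← div_eq_mul_inv]
    exact ENNReal.div_le_of_le_mul (by simpa using h1)
  set g : E → ENNReal := fun x => ∑ i, w i * ψ i x with hg
  have hgm : Measurable g := Finset.measurable_sum _ fun i _ => (hψ i).const_mul _
  have hg1 : ∀ x, g x ≤ 1 := fun x => by
    rw [← hsum x]
    exact Finset.sum_le_sum fun i _ => by simpa using mul_le_mul_left (hw1 i) (ψ i x)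
  have hwa : ∀ i, w i * a i = t * b i := fun i => by
    by_cases h0 : a i = 0
    · simp [h0, hab i h0]
    · rw [hw]; dsimp only
      rw [mul_right_comm, ENNReal.div_mul_cancel h0 (hatop i)]
  have hsb : ∑ i, b i = 1 := by
    rw [hb, ← lintegral_finsetSum _ (fun i _ => hψ i)]
    simp [hsum]
  have hig : ∫⁻ x, g x ∂μ' = t := by
    rw [hg, lintegral_finsetSum _ (fun i _ => (hψ i).const_mul _)]
    simp_rw [lintegral_const_mul _ (hψ _)]
    change ∑ i, w i * a i = t
    simp_rw [hwa, ← Finset.mul_sum, hsb, mul_one]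
  set ρ : Measure E := μ'.withDensity (fun x => 1 - g x) with hρ
  have hρu : ρ Set.univ = 1 - t := by
    rw [hρ, withDensity_apply _ MeasurableSet.univ, Measure.restrict_univ,
      lintegral_sub hgm (by rw [hig]; exact htop) (Eventually.of_forall hg1), hig]
    simp
  have : IsFiniteMeasure ρ := ⟨by rw [hρu]; exact (tsub_le_self.trans_lt ENNReal.one_lt_top)⟩
  refine ⟨∑ i, (t / a i) • (α i).prod (β i), ρ.prod μ, ?_, ?_, ?_, ?_⟩
  · rw [Measure.map_add _ _ measurable_fst, Measure.map_fst_prod, measure_univ, one_smul,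
      ← Measure.mapₗ_apply_of_measurable measurable_fst, map_sum]
    simp_rw [map_smul, Measure.mapₗ_apply_of_measurable measurable_fst, Measure.map_fst_prod, hβu, smul_smul]
    ext s hs
    simp only [Measure.add_apply, Measure.finsetSum_apply, Measure.smul_apply, smul_eq_mul, hα, hρ,
      withDensity_apply _ hs]
    simp_rw [← lintegral_const_mul _ (hψ _)]
    rw [← lintegral_finsetSum _ (fun i _ => (hψ i).const_mul _),
      ← lintegral_add_left (Finset.measurable_sum _ fun i _ => (hψ i).const_mul _)]
    have : ∀ x, ∑ i, t / a i * b i * ψ i x + (1 - g x) = 1 := fun x => add_tsub_cancel_of_le (hg1 x)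
    simp [this]
  · rw [Measure.map_add _ _ measurable_snd, Measure.map_snd_prod, hρu,
      ← Measure.mapₗ_apply_of_measurable measurable_snd, map_sum]
    simp_rw [map_smul, Measure.mapₗ_apply_of_measurable measurable_snd, Measure.map_snd_prod, hαu, smul_smul]
    have hc : ∀ i, (t / a i * a i) • β i = t • β i := fun i => by
      by_cases h0 : a i = 0
      · have : β i = 0 := by rw [← Measure.measure_univ_eq_zero, hβu, hab i h0]
        simp [this]
      · rw [ENNReal.div_mul_cancel h0 (hatop i)]
    simp_rw [hc]
    ext s hs
    simp only [Measure.add_apply, Measure.finsetSum_apply, Measure.smul_apply, smul_eq_mul, hβ,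
      withDensity_apply _ hs]
    rw [← Finset.mul_sum, ← lintegral_finsetSum _ (fun i _ => hψ i)]
    simp only [hsum, lintegral_const, Measure.restrict_apply_univ, one_mul]
    rw [← add_mul, add_tsub_cancel_of_le ht1, one_mul]
  · rw [← Set.univ_prod_univ, Measure.prod_prod, hρu, measure_univ, mul_one]
  · intro P hP hi
    have hz : ∀ i, ((α i).prod (β i)) {p | ¬ P p} = 0 := fun i => by
      change ∀ᵐ p ∂((α i).prod (β i)), P p
      rw [Measure.ae_prod_iff_ae_ae hP]
      have e1 : ∀ᵐ x ∂(α i), ψ i x ≠ 0 := (ae_withDensity_iff (hψ i)).2 (Eventually.of_forall fun x hx => hx)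
      have e2 : ∀ᵐ x ∂(β i), ψ i x ≠ 0 := (ae_withDensity_iff (hψ i)).2 (Eventually.of_forall fun x hx => hx)
      filter_upwards [e1] with x hx
      filter_upwards [e2] with y hy
      exact hi i x y hx hy
    rw [ae_iff, Measure.finsetSum_apply]
    simp [hz]

/-! ### Convex order and second-moment tails -/

theorem integrable_of_growth {d : ℕ} {μ : Measure (Rd d)} [IsProbabilityMeasure μ]
    (h2 : FiniteSecondMoment μ) {g : Rd d → ℝ} (hg : Continuous g) {C : ℝ}
    (hC : ∀ x, |g x| ≤ C * (1 + ‖x‖ ^ 2)) : Integrable g μ := by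
  refine Integrable.mono' (((integrable_const (1 : ℝ)).add h2).const_mul C)
    hg.aestronglyMeasurable (Eventually.of_forall fun x => ?_)
  simpa using hC x

theorem ConvexOrder.lintegral_le {d : ℕ} {μ ν : Measure (Rd d)} [IsProbabilityMeasure μ]
    [IsProbabilityMeasure ν] (hμ : FiniteSecondMoment μ) (hν : FiniteSecondMoment ν)
    (h : ConvexOrder μ ν) {g : Rd d → ℝ} (hg : Continuous g) (hgc : ConvexOn ℝ Set.univ g)
    (hg0 : ∀ x, 0 ≤ g x) {C : ℝ} (hC : ∀ x, |g x| ≤ C * (1 + ‖x‖ ^ 2)) :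
    ∫⁻ x, ENNReal.ofReal (g x) ∂μ ≤ ∫⁻ x, ENNReal.ofReal (g x) ∂ν := by
  have i1 := integrable_of_growth hμ hg hC
  have i2 := integrable_of_growth hν hg hC
  rw [← ofReal_integral_eq_lintegral_ofReal i1 (Eventually.of_forall hg0),
    ← ofReal_integral_eq_lintegral_ofReal i2 (Eventually.of_forall hg0)]
  exact ENNReal.ofReal_le_ofReal (h g hgc i1 i2)

/-- Fatou's lemma for weak convergence, applied to a uniform bound on the integrals of `g`. -/
theorem lintegral_le_of_tendsto {d : ℕ} {P : ℕ → ProbabilityMeasure (Rd d)}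
    {Q : ProbabilityMeasure (Rd d)} {ν : Measure (Rd d)} {g : Rd d → ℝ}
    (hlim : Tendsto P atTop (𝓝 Q)) (hg : Continuous g) (hg0 : ∀ x, 0 ≤ g x)
    (hle : ∀ n, ∫⁻ x, ENNReal.ofReal (g x) ∂(P n : Measure (Rd d)) ≤
      ∫⁻ x, ENNReal.ofReal (g x) ∂ν) :
    ∫⁻ x, ENNReal.ofReal (g x) ∂(Q : Measure (Rd d)) ≤ ∫⁻ x, ENNReal.ofReal (g x) ∂ν := by
  refine (lintegral_le_liminf_lintegral_of_forall_isOpen_measure_le_liminf_measure hg hg0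
    fun G hG => ProbabilityMeasure.le_liminf_measure_open_of_tendsto hlim hG).trans ?_
  exact (liminf_le_liminf (Eventually.of_forall hle)).trans (by simp)

/-- The convex function `4 (‖x‖ - R)₊²`. It dominates `‖x‖²` outside the ball of radius `2R`,
so its integral controls the tail of the second moment, and being convex it can be tested against
the convex order. -/
def tailSq {d : ℕ} (R : ℝ) (x : Rd d) : ℝ := 4 * (max (‖x‖ - R) 0) ^ 2

theorem tailSq_nonneg {d : ℕ} (R : ℝ) (x : Rd d) : 0 ≤ tailSq R x := by
  unfold tailSq; positivity

theorem tailSq_continuous {d : ℕ} (R : ℝ) : Continuous (tailSq (d := d) R) := by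
  unfold tailSq; fun_prop

theorem tailSq_convex {d : ℕ} (R : ℝ) : ConvexOn ℝ Set.univ (tailSq (d := d) R) := by
  have h1 : ConvexOn ℝ Set.univ (fun x : Rd d => ‖x‖ - R) :=
    (convexOn_norm convex_univ).sub (concaveOn_const R convex_univ)
  have h2 : ConvexOn ℝ Set.univ (fun x : Rd d => max (‖x‖ - R) 0) :=
    h1.sup (convexOn_const 0 convex_univ)
  have h3 := (h2.pow (fun x _ => le_max_right _ _) 2).smul (show (0 : ℝ) ≤ 4 by norm_num)
  exact h3

theorem tailSq_le {d : ℕ} {R : ℝ} (hR : 0 ≤ R) (x : Rd d) : tailSq R x ≤ 4 * ‖x‖ ^ 2 := by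
  unfold tailSq
  have : max (‖x‖ - R) 0 ≤ ‖x‖ := max_le (by linarith) (norm_nonneg x)
  gcongr

theorem tailSq_growth {d : ℕ} {R : ℝ} (hR : 0 ≤ R) (x : Rd d) :
    |tailSq R x| ≤ 4 * (1 + ‖x‖ ^ 2) := by
  rw [abs_of_nonneg (tailSq_nonneg R x)]
  linarith [tailSq_le hR x]

theorem sq_le_tailSq {d : ℕ} {R : ℝ} {x : Rd d} (h : 2 * R ≤ ‖x‖) :
    ‖x‖ ^ 2 ≤ tailSq R x := by
  unfold tailSq
  have h1 : ‖x‖ ≤ 2 * max (‖x‖ - R) 0 := by linarith [le_max_left (‖x‖ - R) 0]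
  nlinarith [norm_nonneg x]

theorem tendsto_tailSq {d : ℕ} {ν : Measure (Rd d)}
    (hν : FiniteSecondMoment ν) :
    Tendsto (fun R : ℝ => ∫⁻ x, ENNReal.ofReal (tailSq R x) ∂ν) atTop (𝓝 0) := by
  have h := tendsto_lintegral_filter_of_dominated_convergence (μ := ν) (l := (atTop : Filter ℝ))
    (F := fun R x => ENNReal.ofReal (tailSq R x)) (f := fun _ => 0)
    (fun x => ENNReal.ofReal (4 * ‖x‖ ^ 2))
    (Eventually.of_forall fun R => (tailSq_continuous R).measurable.ennreal_ofReal)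
    ?_ ?_ ?_
  · simpa using h
  · filter_upwards [eventually_ge_atTop 0] with R hR
    exact Eventually.of_forall fun x => ENNReal.ofReal_le_ofReal (tailSq_le hR x)
  · exact (Integrable.const_mul hν 4).lintegral_lt_top.ne
  · refine Eventually.of_forall fun x => tendsto_const_nhds.congr' ?_
    filter_upwards [eventually_ge_atTop ‖x‖] with R hR
    simp [tailSq, hR]

/-- Since `1 ≤ r² ≤ tailSq (r / 2) x` for `‖x‖ > r ≥ 1`, the `ν`-integral of `tailSq (r / 2)`
bounds the mass outside the ball of radius `r` uniformly. -/
theorem isTight_of_tailSq {d : ℕ} {ν : Measure (Rd d)} (hν : FiniteSecondMoment ν)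
    {S : Set (Measure (Rd d))}
    (hS : ∀ μ ∈ S, ∀ R : ℝ, 0 ≤ R → ∫⁻ x, ENNReal.ofReal (tailSq R x) ∂μ ≤
      ∫⁻ x, ENNReal.ofReal (tailSq R x) ∂ν) : IsTightMeasureSet S := by
  refine isTightMeasureSet_of_tendsto_measure_norm_gt ?_
  have h1 : Tendsto (fun r : ℝ => ∫⁻ x, ENNReal.ofReal (tailSq (r / 2) x) ∂ν) atTop (𝓝 0) :=
    (tendsto_tailSq hν).comp (tendsto_id.atTop_div_const two_pos)
  refine tendsto_of_tendsto_of_tendsto_of_le_of_le' tendsto_const_nhds h1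
    (Eventually.of_forall fun _ => zero_le) ?_
  filter_upwards [eventually_ge_atTop 1] with r hr
  refine iSup₂_le fun μ hμ => le_trans ?_ (hS μ hμ (r / 2) (by linarith))
  have hm : MeasurableSet {x : Rd d | r < ‖x‖} := measurableSet_lt measurable_const measurable_norm
  rw [← lintegral_indicator_one hm]
  refine lintegral_mono fun x => ?_
  by_cases hx : r < ‖x‖
  · rw [Set.indicator_of_mem (show x ∈ {x : Rd d | r < ‖x‖} from hx)]
    simp only [Pi.one_apply, ENNReal.one_le_ofReal]
    refine le_trans ?_ (sq_le_tailSq (by linarith))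
    nlinarith
  · rw [Set.indicator_of_notMem (show x ∉ {x : Rd d | r < ‖x‖} from hx)]
    exact zero_le

/-! ### From weak convergence to Wasserstein convergence -/

theorem W2sq_nonneg {d : ℕ} (μ ν : Measure (Rd d)) : 0 ≤ W2sq μ ν := by
  refine Real.sInf_nonneg ?_
  rintro _ ⟨π, -, rfl⟩
  exact integral_nonneg fun p => by positivity

theorem W2sq_le {d : ℕ} {μ ν : Measure (Rd d)} {π : Measure (Rd d × Rd d)}
    (hπ : IsCoupling π μ ν) {ε : ℝ} (hε : 0 ≤ ε)
    (h : ∫⁻ p, ENNReal.ofReal (‖p.1 - p.2‖ ^ 2) ∂π ≤ ENNReal.ofReal ε) : W2sq μ ν ≤ ε := by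
  unfold W2sq
  refine le_trans (csInf_le ⟨0, ?_⟩ (Set.mem_image_of_mem _ hπ)) ?_
  · rintro _ ⟨π, -, rfl⟩
    exact integral_nonneg fun p => by positivity
  · rw [integral_eq_lintegral_of_nonneg_ae (Eventually.of_forall fun p => by positivity)
      (by fun_prop)]
    exact ENNReal.toReal_le_of_le_ofReal hε h

/-- The cost of the coupling from `exists_partial_coupling`. On the part pairing points of the
same cell, `‖x - y‖²` is at most `ε / 4` plus a tail term; on the remaining part, of mass `s`, it is
at most `16 R²` plus a tail term. The tail terms depend on one coordinate each, so they integrate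
to tails of the marginals. -/
theorem W2sq_le_of_partition {d : ℕ} {ι : Type*} [Fintype ι]
    (μ' μ : Measure (Rd d)) [IsProbabilityMeasure μ'] [IsProbabilityMeasure μ]
    (ψ : ι → Rd d → ENNReal) (hψ : ∀ i, Measurable (ψ i)) (hsum : ∀ x, ∑ i, ψ i x = 1)
    {s R ε : ℝ} (hR : 0 ≤ R) (hε : 0 ≤ ε) (hs0 : 0 ≤ s) (hs1 : s < 1) (hsR : 16 * R ^ 2 * s ≤ ε / 4)
    (h : ∀ i, ENNReal.ofReal (1 - s) * ∫⁻ x, ψ i x ∂μ ≤ ∫⁻ x, ψ i x ∂μ')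
    (hcell : ∀ i, (∀ x y, ψ i x ≠ 0 → ψ i y ≠ 0 → ‖x - y‖ ^ 2 ≤ ε / 4) ∨
      ∀ x, ψ i x ≠ 0 → 2 * R ≤ ‖x‖)
    (hμ' : ∫⁻ x, ENNReal.ofReal (tailSq R x) ∂μ' ≤ ENNReal.ofReal (ε / 8))
    (hμ : ∫⁻ x, ENNReal.ofReal (tailSq R x) ∂μ ≤ ENNReal.ofReal (ε / 8)) :
    W2sq μ' μ ≤ ε := by
  obtain ⟨π₁, π₂, hf, hsn, hu, hae⟩ := exists_partial_coupling μ' μ ψ hψ hsum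
    (ENNReal.ofReal (1 - s)) (by simpa using hs1) (by simpa using hs0) h
  refine W2sq_le (π := π₁ + π₂) ⟨hf, hsn⟩ hε ?_
  have hpar : ∀ x y : Rd d, ‖x - y‖ ^ 2 ≤ 2 * ‖x‖ ^ 2 + 2 * ‖y‖ ^ 2 := fun x y => by
    have := norm_sub_le x y
    nlinarith [norm_nonneg (x - y), sq_nonneg (‖x‖ - ‖y‖)]
  have hT0 : ∀ p : Rd d × Rd d, 0 ≤ 2 * tailSq R p.1 + 2 * tailSq R p.2 := fun p => by
    linarith [tailSq_nonneg R p.1, tailSq_nonneg R p.2]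
  have h1 : ∀ᵐ p ∂π₁, ENNReal.ofReal (‖p.1 - p.2‖ ^ 2) ≤
      ENNReal.ofReal (ε / 4) + ENNReal.ofReal (2 * tailSq R p.1 + 2 * tailSq R p.2) := by
    have := hae (fun p => ‖p.1 - p.2‖ ^ 2 ≤ ε / 4 + (2 * tailSq R p.1 + 2 * tailSq R p.2)) ?_ ?_
    · filter_upwards [this] with p hp
      rw [← ENNReal.ofReal_add (by positivity) (hT0 p)]
      exact ENNReal.ofReal_le_ofReal hp
    · have := tailSq_continuous (d := d) R
      exact (isClosed_le (by fun_prop) (by fun_prop)).measurableSet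
    · intro i x y hx hy
      have := hT0 (x, y)
      dsimp only at this ⊢
      rcases hcell i with hc | hc
      · linarith [hc x y hx hy]
      · linarith [hpar x y, sq_le_tailSq (hc x hx), sq_le_tailSq (hc y hy)]
  have hb : ∀ x : Rd d, ‖x‖ ^ 2 ≤ 4 * R ^ 2 + tailSq R x := fun x => by
    rcases le_total (2 * R) ‖x‖ with hx | hx
    · nlinarith [sq_le_tailSq hx]
    · nlinarith [tailSq_nonneg R x, norm_nonneg x]
  have h2 : ∀ p : Rd d × Rd d, ENNReal.ofReal (‖p.1 - p.2‖ ^ 2) ≤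
      ENNReal.ofReal (16 * R ^ 2) + ENNReal.ofReal (2 * tailSq R p.1 + 2 * tailSq R p.2) := fun p => by
    rw [← ENNReal.ofReal_add (by positivity) (hT0 p)]
    exact ENNReal.ofReal_le_ofReal (by linarith [hpar p.1 p.2, hb p.1, hb p.2])
  have hprob : (π₁ + π₂) Set.univ = 1 := by
    have := congrArg (fun m : Measure (Rd d) => m Set.univ) hf
    rw [Measure.map_apply measurable_fst MeasurableSet.univ] at this
    simpa using this
  have hu1 : π₁ Set.univ ≤ 1 := by
    rw [← hprob, Measure.add_apply]; exact le_self_add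
  have hu2 : π₂ Set.univ = ENNReal.ofReal s := by
    rw [hu, ← ENNReal.ofReal_one, ← ENNReal.ofReal_sub _ (by linarith)]; congr 1; ring
  have hTi : ∫⁻ p, ENNReal.ofReal (2 * tailSq R p.1 + 2 * tailSq R p.2) ∂(π₁ + π₂) ≤
      ENNReal.ofReal (ε / 2) := by
    have hm : Measurable fun x : Rd d => ENNReal.ofReal (2 * tailSq R x) :=
      ((tailSq_continuous R).measurable.const_mul 2).ennreal_ofReal
    have hm' : Measurable fun x : Rd d => ENNReal.ofReal (tailSq R x) :=
      (tailSq_continuous R).measurable.ennreal_ofReal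
    have e0 : ∀ p : Rd d × Rd d, ENNReal.ofReal (2 * tailSq R p.1 + 2 * tailSq R p.2) =
        ENNReal.ofReal (2 * tailSq R p.1) + ENNReal.ofReal (2 * tailSq R p.2) := fun p =>
      ENNReal.ofReal_add (by linarith [tailSq_nonneg R p.1]) (by linarith [tailSq_nonneg R p.2])
    simp_rw [e0]
    rw [lintegral_add_left (f := fun p : Rd d × Rd d => ENNReal.ofReal (2 * tailSq R p.1))
      (hm.comp measurable_fst)]
    have e1 : ∫⁻ p, ENNReal.ofReal (2 * tailSq R p.1) ∂(π₁ + π₂) =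
        ∫⁻ x, ENNReal.ofReal (2 * tailSq R x) ∂μ' := by
      rw [← hf, lintegral_map hm measurable_fst]
    have e2 : ∫⁻ p, ENNReal.ofReal (2 * tailSq R p.2) ∂(π₁ + π₂) =
        ∫⁻ x, ENNReal.ofReal (2 * tailSq R x) ∂μ := by
      rw [← hsn, lintegral_map hm measurable_snd]
    rw [e1, e2]
    simp_rw [ENNReal.ofReal_mul (show (0 : ℝ) ≤ 2 by norm_num)]
    rw [lintegral_const_mul _ hm', lintegral_const_mul _ hm']
    calc _ ≤ ENNReal.ofReal 2 * ENNReal.ofReal (ε / 8) + ENNReal.ofReal 2 * ENNReal.ofReal (ε / 8) := by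
          gcongr
      _ = ENNReal.ofReal (ε / 2) := by
          rw [← ENNReal.ofReal_mul (by norm_num), ← ENNReal.ofReal_add (by positivity) (by positivity)]
          congr 1; ring
  calc ∫⁻ p, ENNReal.ofReal (‖p.1 - p.2‖ ^ 2) ∂(π₁ + π₂)
      = ∫⁻ p, ENNReal.ofReal (‖p.1 - p.2‖ ^ 2) ∂π₁ + ∫⁻ p, ENNReal.ofReal (‖p.1 - p.2‖ ^ 2) ∂π₂ :=
        lintegral_add_measure _ _ _
    _ ≤ ∫⁻ p, (ENNReal.ofReal (ε / 4) + ENNReal.ofReal (2 * tailSq R p.1 + 2 * tailSq R p.2)) ∂π₁ +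
        ∫⁻ p, (ENNReal.ofReal (16 * R ^ 2) + ENNReal.ofReal (2 * tailSq R p.1 + 2 * tailSq R p.2)) ∂π₂ :=
        add_le_add (lintegral_mono_ae h1) (lintegral_mono h2)
    _ = ENNReal.ofReal (ε / 4) * π₁ Set.univ + ENNReal.ofReal (16 * R ^ 2) * π₂ Set.univ +
        ∫⁻ p, ENNReal.ofReal (2 * tailSq R p.1 + 2 * tailSq R p.2) ∂(π₁ + π₂) := by
        rw [lintegral_add_left measurable_const, lintegral_add_left measurable_const,
          lintegral_add_measure, lintegral_const, lintegral_const]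
        ring
    _ ≤ ENNReal.ofReal (ε / 4) * 1 + ENNReal.ofReal (16 * R ^ 2) * ENNReal.ofReal s +
        ENNReal.ofReal (ε / 2) := by
        rw [hu2]; gcongr
    _ ≤ ENNReal.ofReal ε := by
        rw [mul_one, ← ENNReal.ofReal_mul (by positivity),
          ← ENNReal.ofReal_add (by positivity) (by positivity),
          ← ENNReal.ofReal_add (by positivity) (by positivity)]
        exact ENNReal.ofReal_le_ofReal (by linarith)

/-- A finite continuous partition of unity of `ℝ^d` whose members are supported in small balls,
except for one supported outside the ball of radius `R`. -/
theorem exists_cells {d : ℕ} (R : ℝ) {δ : ℝ} (hδ : 0 < δ) :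
    ∃ (ι : Type) (_ : Fintype ι) (ψ : ι → BoundedContinuousFunction (Rd d) NNReal),
      (∀ x, ∑ i, (ψ i x : ENNReal) = 1) ∧
      ∀ i, (∀ x y, ψ i x ≠ 0 → ψ i y ≠ 0 → ‖x - y‖ ≤ 2 * δ) ∨ ∀ x, ψ i x ≠ 0 → R ≤ ‖x‖ := by
  classical
  obtain ⟨T, hTf, hT⟩ := Metric.totallyBounded_iff.1
    (isCompact_closedBall (0 : Rd d) R).totallyBounded δ hδ
  have : Fintype T := hTf.fintype
  let U : Option T → Set (Rd d) := fun i => i.elim (Metric.closedBall 0 R)ᶜ fun p => Metric.ball p δ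
  have hUo : ∀ i, IsOpen (U i) := by
    rintro (_ | p)
    · exact Metric.isClosed_closedBall.isOpen_compl
    · exact Metric.isOpen_ball
  have hUc : Set.univ ⊆ ⋃ i, U i := by
    intro x _
    by_cases hx : x ∈ Metric.closedBall (0 : Rd d) R
    · obtain ⟨p, hp, hxp⟩ := Set.mem_iUnion₂.1 (hT hx)
      exact Set.mem_iUnion.2 ⟨some ⟨p, hp⟩, hxp⟩
    · exact Set.mem_iUnion.2 ⟨none, hx⟩
  obtain ⟨f, hf⟩ := PartitionOfUnity.exists_isSubordinate_of_locallyFinite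
    (X := Rd d) isClosed_univ U hUo (locallyFinite_of_finite U) hUc
  have hf0 : ∀ i x, f i x ≠ 0 → x ∈ U i := fun i x hx => hf i (subset_tsupport _ hx)
  obtain ⟨e⟩ : Nonempty (Option T ≃ Fin (Fintype.card (Option T))) := ⟨Fintype.equivFin _⟩
  refine ⟨Fin (Fintype.card (Option T)), inferInstance, fun i =>
    BoundedContinuousFunction.mkOfBound ⟨fun x => Real.toNNReal (f (e.symm i) x), by fun_prop⟩ 1
      fun x y => ?_, ?_, ?_⟩
  · have h1 := f.le_one (e.symm i) x
    have h2 := f.le_one (e.symm i) y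
    have h3 := f.nonneg (e.symm i) x
    have h4 := f.nonneg (e.symm i) y
    rw [NNReal.dist_eq, abs_le]
    simp only [ContinuousMap.coe_mk, Real.coe_toNNReal _ h3, Real.coe_toNNReal _ h4]
    constructor <;> linarith
  · intro x
    have h1 := f.sum_eq_one (Set.mem_univ x)
    rw [finsum_eq_sum_of_fintype] at h1
    rw [← e.sum_comp]
    simp only [BoundedContinuousFunction.mkOfBound_coe, ContinuousMap.coe_mk, Equiv.symm_apply_apply]
    change ∑ i, ENNReal.ofReal (f i x) = 1
    rw [← ENNReal.ofReal_sum_of_nonneg fun i _ => f.nonneg i x, h1, ENNReal.ofReal_one]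
  · intro i
    have hne : ∀ x, Real.toNNReal (f (e.symm i) x) ≠ 0 → x ∈ U (e.symm i) := fun x hx =>
      hf0 _ x fun h => hx (by simp [h])
    rcases hi : e.symm i with _ | p
    · right
      intro x hx
      have := hne x (by simpa [hi] using hx)
      simp only [hi, U, Option.elim_none, Set.mem_compl_iff, mem_closedBall_zero_iff, not_le] at this
      exact this.le
    · left
      intro x y hx hy
      have hx := hne x (by simpa [hi] using hx)
      have hy := hne y (by simpa [hi] using hy)
      simp only [hi, U, Option.elim_some, Metric.mem_ball] at hx hy
      rw [← dist_eq_norm]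
      linarith [dist_triangle_right x y p]

/-- Weak convergence together with second-moment tails dominated by those of a fixed `ν ∈ P₂`
implies convergence in `W₂`. -/
theorem tendsto_W2_of_tendsto {d : ℕ} {P : ℕ → ProbabilityMeasure (Rd d)}
    {Q : ProbabilityMeasure (Rd d)} {ν : Measure (Rd d)} (hν : FiniteSecondMoment ν)
    (hlim : Tendsto P atTop (𝓝 Q))
    (hP : ∀ n, ∀ R : ℝ, 0 ≤ R → ∫⁻ x, ENNReal.ofReal (tailSq R x) ∂(P n : Measure (Rd d)) ≤
      ∫⁻ x, ENNReal.ofReal (tailSq R x) ∂ν) :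
    Tendsto (fun n => W2 (P n : Measure (Rd d)) Q) atTop (𝓝 0) := by
  suffices h : Tendsto (fun n => W2sq (P n : Measure (Rd d)) Q) atTop (𝓝 0) by
    simpa [W2] using h.sqrt
  rw [Metric.tendsto_atTop']
  intro ε' hε'
  obtain ⟨ε, hε, hεε⟩ : ∃ ε : ℝ, 0 < ε ∧ ε < ε' := ⟨ε' / 2, by linarith, by linarith⟩
  -- Choose `R` to make the tails small, then cells of diameter at most `√ε / 2`, then the mass `s`
  -- of the unmatched part; the cell masses converge since the partition of unity is continuous.
  suffices h : ∀ᶠ n in atTop, W2sq (P n : Measure (Rd d)) Q ≤ ε by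
    obtain ⟨N, hN⟩ := eventually_atTop.1 h
    refine ⟨N, fun n hn => ?_⟩
    rw [Real.dist_eq, sub_zero, abs_of_nonneg (W2sq_nonneg _ _)]
    linarith [hN n hn.le]
  obtain ⟨R, hR, hRν⟩ : ∃ R : ℝ, 0 ≤ R ∧
      ∫⁻ x, ENNReal.ofReal (tailSq R x) ∂ν ≤ ENNReal.ofReal (ε / 8) :=
    ((eventually_ge_atTop 0).and ((tendsto_tailSq hν).eventually_le_const
      (show 0 < ENNReal.ofReal (ε / 8) by simpa using hε))).exists
  have hQ : ∫⁻ x, ENNReal.ofReal (tailSq R x) ∂(Q : Measure (Rd d)) ≤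
      ∫⁻ x, ENNReal.ofReal (tailSq R x) ∂ν :=
    lintegral_le_of_tendsto hlim (tailSq_continuous R) (tailSq_nonneg R) fun n => hP n R hR
  obtain ⟨ι, _, ψ, hsum, hcell⟩ := exists_cells (d := d) (2 * R) (δ := Real.sqrt ε / 4) (by positivity)
  obtain ⟨s, hs0, hs1, hsR⟩ : ∃ s : ℝ, 0 < s ∧ s < 1 ∧ 16 * R ^ 2 * s ≤ ε / 4 := by
    have hpos : 0 < 64 * (R ^ 2 + 1) + ε := by positivity
    refine ⟨ε / (64 * (R ^ 2 + 1) + ε), by positivity, ?_, ?_⟩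
    · rw [div_lt_one hpos]; nlinarith [sq_nonneg R]
    · rw [← mul_div_assoc, div_le_iff₀ hpos]; nlinarith [sq_nonneg R, sq_nonneg ε]
  have hev : ∀ᶠ n in atTop, ∀ i, ENNReal.ofReal (1 - s) * ∫⁻ x, ψ i x ∂(Q : Measure (Rd d)) ≤
      ∫⁻ x, ψ i x ∂(P n : Measure (Rd d)) := by
    refine eventually_all.2 fun i => ?_
    have hl := ProbabilityMeasure.tendsto_iff_forall_lintegral_tendsto.1 hlim (ψ i)
    by_cases h0 : ∫⁻ x, ψ i x ∂(Q : Measure (Rd d)) = 0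
    · simp [h0]
    · refine hl.eventually_const_le ?_
      have hfin : ∫⁻ x, ψ i x ∂(Q : Measure (Rd d)) ≠ ⊤ :=
        ((ψ i).lintegral_lt_top_of_nnreal (Q : Measure (Rd d))).ne
      calc _ < 1 * ∫⁻ x, ψ i x ∂(Q : Measure (Rd d)) := by
            refine ENNReal.mul_lt_mul_left h0 hfin ?_
            rw [ENNReal.ofReal_lt_one]; linarith
        _ = _ := one_mul _
  filter_upwards [hev] with n hn
  refine W2sq_le_of_partition _ _ (fun i x => (ψ i x : ENNReal)) (fun i => by fun_prop) hsum hR hε.le hs0.le hs1 hsR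
    hn (fun i => ?_) ((hP n R hR).trans hRν) (hQ.trans hRν)
  rcases hcell i with hc | hc
  · left
    intro x y hx hy
    have h1 := hc x y (by simpa using hx) (by simpa using hy)
    have h2 := Real.sq_sqrt hε.le
    nlinarith [norm_nonneg (x - y), Real.sqrt_nonneg ε]
  · right
    intro x hx
    exact hc x (by simpa using hx)

/-! ### Stability of the convex order under weak limits -/

/-- Continuous convex functions of at most linear growth; these are integrable against every
measure in `P₂`. -/
structure IsTestFun {d : ℕ} (g : Rd d → ℝ) : Prop where
  convex : ConvexOn ℝ Set.univ g
  continuous : Continuous g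
  growth : ∃ A : ℝ, 0 ≤ A ∧ ∀ x, |g x| ≤ A * (1 + ‖x‖)

theorem IsTestFun.affine {d : ℕ} (l : Rd d →L[ℝ] ℝ) (c : ℝ) : IsTestFun fun x => l x + c := by
  refine ⟨(l.toLinearMap.convexOn convex_univ).add (convexOn_const c convex_univ), by fun_prop,
    ‖l‖ + |c|, by positivity, fun x => ?_⟩
  have h1 : |l x| ≤ ‖l‖ * ‖x‖ := l.le_opNorm x
  have h2 := abs_add_le (l x) c
  nlinarith [norm_nonneg x, norm_nonneg l, abs_nonneg c, mul_nonneg (abs_nonneg c) (norm_nonneg x)]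

theorem IsTestFun.max {d : ℕ} {f g : Rd d → ℝ} (hf : IsTestFun f) (hg : IsTestFun g) :
    IsTestFun fun x => max (f x) (g x) := by
  obtain ⟨A, hA, hfA⟩ := hf.growth
  obtain ⟨B, hB, hgB⟩ := hg.growth
  refine ⟨hf.convex.sup hg.convex, hf.continuous.max hg.continuous, A + B, by positivity,
    fun x => abs_max_le_max_abs_abs.trans (max_le ?_ ?_)⟩
  · nlinarith [hfA x, norm_nonneg x, mul_nonneg hB (norm_nonneg x)]
  · nlinarith [hgB x, norm_nonneg x, mul_nonneg hA (norm_nonneg x)]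

/-- A convex function on `ℝ^d` is the pointwise limit from below of maxima of finitely many
affine functions. -/
theorem ConvexOn.exists_testFun_seq {d : ℕ} {f : Rd d → ℝ} (hf : ConvexOn ℝ Set.univ f) :
    ∃ F : ℕ → Rd d → ℝ, (∀ k, IsTestFun (F k)) ∧ (∀ k x, F 0 x ≤ F k x) ∧
      (∀ k x, F k x ≤ f x) ∧ ∀ x, Tendsto (fun k => F k x) atTop (𝓝 (f x)) := by
  have hfc : Continuous f := by
    rw [← continuousOn_univ]; exact hf.continuousOn isOpen_univ
  obtain ⟨l, c, hle, hsup⟩ := hf.real_univ_sSup_of_nat_affine_eq hfc.lowerSemicontinuous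
  let a : Rd d → ℕ → ℝ := fun x i => l i x + c i
  have hle' : ∀ x i, a x i ≤ f x := fun x i => hle i x
  have hsup' : ∀ x, ⨆ i, a x i = f x := fun x => by
    rw [← congrFun hsup x, iSup_apply]; rfl
  have hbdd : ∀ x, BddAbove (Set.range (a x)) := fun x => ⟨f x, by rintro _ ⟨i, rfl⟩; exact hle' x i⟩
  refine ⟨fun k x => partialSups (a x) k, fun k => ?_,
    fun k x => (partialSups (a x)).monotone (Nat.zero_le k),
    fun k x => partialSups_le _ _ _ fun i _ => hle' x i, fun x => ?_⟩
  · induction k with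
    | zero => simpa using IsTestFun.affine (l 0) (c 0)
    | succ k ih =>
      have := ih.max (IsTestFun.affine (l (k + 1)) (c (k + 1)))
      simpa [partialSups_add_one, a] using this
  · have := tendsto_atTop_ciSup (partialSups (a x)).monotone
      (by simpa [bddAbove_range_partialSups] using hbdd x)
    rwa [ciSup_partialSups_eq (hbdd x), hsup' x] at this

/-- For test functions the convex order passes to weak limits. Adding `s ‖x‖²` makes `g` bounded
below, so that Fatou's lemma applies to `g + s ‖x‖² + K`; then `s → 0`. -/
theorem IsTestFun.integral_le {d : ℕ} {P : ℕ → ProbabilityMeasure (Rd d)}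
    {Q : ProbabilityMeasure (Rd d)} {ν : Measure (Rd d)} [IsProbabilityMeasure ν]
    (hν : FiniteSecondMoment ν) (hQ : FiniteSecondMoment (Q : Measure (Rd d)))
    (hlim : Tendsto P atTop (𝓝 Q))
    (hmom : ∀ n, FiniteSecondMoment (P n : Measure (Rd d)))
    (hord : ∀ n, ConvexOrder (P n : Measure (Rd d)) ν) {g : Rd d → ℝ} (hg : IsTestFun g) :
    ∫ x, g x ∂(Q : Measure (Rd d)) ≤ ∫ x, g x ∂ν := by
  obtain ⟨A, hA, hgA⟩ := hg.growth
  have hquad : ∀ x, |g x| ≤ (2 * A) * (1 + ‖x‖ ^ 2) := fun x => by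
    nlinarith [hgA x, mul_nonneg hA (sq_nonneg (‖x‖ - 1)), mul_nonneg hA (sq_nonneg ‖x‖)]
  have iQ := integrable_of_growth hQ hg.continuous hquad
  have iν := integrable_of_growth hν hg.continuous hquad
  have key : ∀ s : ℝ, 0 < s → ∫ x, g x ∂(Q : Measure (Rd d)) + s * ∫ x, ‖x‖ ^ 2 ∂(Q : Measure (Rd d))
      ≤ ∫ x, g x ∂ν + s * ∫ x, ‖x‖ ^ 2 ∂ν := by
    intro s hs
    -- `K` is the constant that completes the square in `s ‖x‖² - A (1 + ‖x‖) + K`.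
    set K : ℝ := A + A ^ 2 / (4 * s) with hK
    let G : Rd d → ℝ := fun x => (g x + s * ‖x‖ ^ 2) + K
    have hK0 : 0 ≤ K := by positivity
    have hG0 : ∀ x, 0 ≤ G x := fun x => by
      have h1 : G x = (g x + A * (1 + ‖x‖)) + (2 * s * ‖x‖ - A) ^ 2 / (4 * s) := by
        simp only [G, hK]; field_simp; ring
      rw [h1]
      have := (abs_le.1 (hgA x)).1
      have : 0 ≤ g x + A * (1 + ‖x‖) := by linarith
      positivity
    have hGc : Continuous G := by have := hg.continuous; fun_prop
    have hGconv : ConvexOn ℝ Set.univ G :=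
      (hg.convex.add (((convexOn_norm convex_univ).pow (fun x _ => norm_nonneg x) 2).smul hs.le)).add
        (convexOn_const K convex_univ)
    have hGq : ∀ x, |G x| ≤ (2 * A + s + K) * (1 + ‖x‖ ^ 2) := fun x => by
      rw [abs_of_nonneg (hG0 x)]
      simp only [G]
      nlinarith [le_abs_self (g x), hquad x, mul_nonneg hK0 (sq_nonneg ‖x‖)]
    have hl := lintegral_le_of_tendsto (ν := ν) hlim hGc hG0 fun n =>
      (hord n).lintegral_le (hmom n) hν hGc hGconv hG0 hGq
    have jQ := integrable_of_growth hQ hGc hGq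
    have jν := integrable_of_growth hν hGc hGq
    rw [← ofReal_integral_eq_lintegral_ofReal jQ (Eventually.of_forall hG0),
      ← ofReal_integral_eq_lintegral_ofReal jν (Eventually.of_forall hG0),
      ENNReal.ofReal_le_ofReal_iff (integral_nonneg hG0)] at hl
    have hexp : ∀ m : Measure (Rd d), IsProbabilityMeasure m → FiniteSecondMoment m →
        Integrable g m → ∫ x, G x ∂m = ∫ x, g x ∂m + s * ∫ x, ‖x‖ ^ 2 ∂m + K := by
      intro m _ hm hgm
      have hsm : Integrable (fun x : Rd d => s * ‖x‖ ^ 2) m := Integrable.const_mul hm s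
      have hgs : Integrable (fun x => g x + s * ‖x‖ ^ 2) m := hgm.add hsm
      simp only [G]
      rw [integral_add hgs (integrable_const K), integral_add hgm hsm,
        integral_const_mul]
      simp
    rw [hexp _ inferInstance hQ iQ, hexp _ inferInstance hν iν] at hl
    linarith
  have hc : ∀ a b : ℝ, Tendsto (fun s : ℝ => a + s * b) (𝓝[>] 0) (𝓝 a) := fun a b => by
    have : Continuous fun s : ℝ => a + s * b := by fun_prop
    simpa using (this.tendsto 0).mono_left nhdsWithin_le_nhds
  refine le_of_tendsto_of_tendsto (hc _ (∫ x, ‖x‖ ^ 2 ∂(Q : Measure (Rd d))))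
    (hc _ (∫ x, ‖x‖ ^ 2 ∂ν)) ?_
  filter_upwards [self_mem_nhdsWithin] with s hs using key s hs

/-- The convex order passes to weak limits. A convex `f` that is integrable for the limit and for
`ν` need not be integrable along the sequence, so it is approximated from below by test functions. -/
theorem convexOrder_of_tendsto {d : ℕ} {P : ℕ → ProbabilityMeasure (Rd d)}
    {Q : ProbabilityMeasure (Rd d)} {ν : Measure (Rd d)} [IsProbabilityMeasure ν]
    (hν : FiniteSecondMoment ν) (hQ : FiniteSecondMoment (Q : Measure (Rd d)))
    (hlim : Tendsto P atTop (𝓝 Q))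
    (hmom : ∀ n, FiniteSecondMoment (P n : Measure (Rd d)))
    (hord : ∀ n, ConvexOrder (P n : Measure (Rd d)) ν) :
    ConvexOrder (Q : Measure (Rd d)) ν := by
  intro f hf hfQ hfν
  obtain ⟨F, hF, h0, hle, hlimF⟩ := hf.exists_testFun_seq
  have hint : ∀ (m : Measure (Rd d)) [IsProbabilityMeasure m], FiniteSecondMoment m →
      ∀ k, Integrable (F k) m := fun m _ hm k => by
    obtain ⟨A, hA, hgA⟩ := (hF k).growth
    refine integrable_of_growth hm (hF k).continuous (C := 2 * A) fun x => ?_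
    nlinarith [hgA x, mul_nonneg hA (sq_nonneg (‖x‖ - 1)), mul_nonneg hA (sq_nonneg ‖x‖)]
  have hconv : Tendsto (fun k => ∫ x, F k x ∂(Q : Measure (Rd d))) atTop
      (𝓝 (∫ x, f x ∂(Q : Measure (Rd d)))) := by
    refine tendsto_integral_of_dominated_convergence (fun x => |F 0 x| + |f x|)
      (fun k => (hF k).continuous.aestronglyMeasurable) ((hint _ hQ 0).abs.add hfQ.abs)
      (fun k => Eventually.of_forall fun x => ?_) (Eventually.of_forall hlimF)
    rw [Real.norm_eq_abs, abs_le]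
    constructor
    · linarith [neg_abs_le (F 0 x), abs_nonneg (f x), h0 k x]
    · linarith [le_abs_self (f x), abs_nonneg (F 0 x), hle k x]
  refine le_of_tendsto' hconv fun k => ?_
  exact ((hF k).integral_le hν hQ hlim hmom hord).trans
    (integral_mono (hint ν hν k) hfν (hle k))

/-! ### Compactness -/

/-- `M_ν = {μ ∈ P₂(ℝ^d) : μ ≤_c ν}` is compact in the `W₂` metric (sequential compactness:
every sequence in `M_ν` has a subsequence converging in `W₂` to an element of `M_ν`). -/
theorem stmt_2 {d : ℕ} (ν : Measure (Rd d)) [IsProbabilityMeasure ν]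
    (hν2 : FiniteSecondMoment ν)
    (μs : ℕ → Measure (Rd d))
    (hprob : ∀ n, IsProbabilityMeasure (μs n))
    (hmom : ∀ n, FiniteSecondMoment (μs n))
    (hord : ∀ n, ConvexOrder (μs n) ν) :
    ∃ (μ : Measure (Rd d)) (φ : ℕ → ℕ), StrictMono φ ∧
      IsProbabilityMeasure μ ∧ FiniteSecondMoment μ ∧ ConvexOrder μ ν ∧
      Tendsto (fun k => W2 (μs (φ k)) μ) atTop (𝓝 0) := by
  let P : ℕ → ProbabilityMeasure (Rd d) := fun n => ⟨μs n, hprob n⟩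
  have htail : ∀ n, ∀ R : ℝ, 0 ≤ R → ∫⁻ x, ENNReal.ofReal (tailSq R x) ∂(P n : Measure (Rd d)) ≤
      ∫⁻ x, ENNReal.ofReal (tailSq R x) ∂ν := fun n R hR =>
    ConvexOrder.lintegral_le (hmom n) hν2 (hord n) (tailSq_continuous R) (tailSq_convex R)
      (tailSq_nonneg R) (tailSq_growth hR)
  have hcpt : IsCompact (closure (Set.range P)) := by
    refine isCompact_closure_of_isTightMeasureSet (isTight_of_tailSq hν2 ?_)
    rintro _ ⟨_, ⟨n, rfl⟩, rfl⟩ R hR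
    exact htail n R hR
  obtain ⟨Q, -, φ, hφ, hlim⟩ := hcpt.tendsto_subseq fun n => subset_closure (Set.mem_range_self n)
  have hQ : FiniteSecondMoment (Q : Measure (Rd d)) := by
    have h1 := lintegral_le_of_tendsto (ν := ν) hlim (tailSq_continuous 0) (tailSq_nonneg 0)
      fun n => htail (φ n) 0 le_rfl
    have h2 : ∫⁻ x, ENNReal.ofReal (tailSq 0 x) ∂ν < ⊤ :=
      (integrable_of_growth hν2 (tailSq_continuous 0) (tailSq_growth le_rfl)).lintegral_lt_top
    refine ⟨by fun_prop, ?_⟩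
    rw [hasFiniteIntegral_iff_ofReal (Eventually.of_forall fun x => by positivity)]
    refine (lintegral_mono fun x => ENNReal.ofReal_le_ofReal ?_).trans_lt (h1.trans_lt h2)
    exact sq_le_tailSq (by simp)
  have hQord : ConvexOrder (Q : Measure (Rd d)) ν :=
    convexOrder_of_tendsto hν2 hQ hlim (fun n => hmom (φ n)) (fun n => hord (φ n))
  have hW : Tendsto (fun k => W2 (P (φ k) : Measure (Rd d)) Q) atTop (𝓝 0) :=
    tendsto_W2_of_tendsto (P := P ∘ φ) hν2 hlim fun n => htail (φ n)
  exact ⟨Q, φ, hφ, Q.2, hQ, hQord, hW⟩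
end
end

section
/- Let ν, ν_n ∈ P_2(ℝ^d) with W_2(ν_n, ν) → 0 as n → ∞, and let μ_n ∈ P_2(ℝ^d) satisfy μ_n ≤_c ν_n for each n. Then the sequence (μ_n) is precompact in the W_2 metric: there exists a subsequence (μ_{n_k}) converging in W_2 to some μ ∈ P_2(ℝ^d) with μ ≤_c ν. -/
/-!
The squared distance to the ball of radius `R`, here `excess R x = (‖x‖ - R)₊²`, is convex, so the
convex order gives `∫ excess R dμ_n ≤ ∫ excess R dν_n`. As the distance to a ball is `1`-Lipschitz,
a nearly optimal coupling of `ν_n` and `ν` bounds the right side by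
`2 ∫ excess R dν + 2 W₂(ν_n, ν)²` up to an arbitrarily small error
(`IsCoupling.integral_excess_le`). Hence the second moments of the `μ_n` are bounded and their tails
are uniformly small for large `n`.

Bounded second moments and Prokhorov's theorem give a subsequence converging weakly to some `μ`
(`exists_weak_limit`). Weak convergence provides couplings of `μ_n` and `μ` concentrated near the
diagonal (`eventually_exists_coupling_of_weak`), built from a finite partition of unity subordinate to
small balls (`exists_coupling_of_partition`); with the uniform tail bound this upgrades weak
convergence to `W₂`-convergence (`tendsto_W2_of_weak`).

For Lipschitz convex `f`, `W₂`-convergence on both sides passes `∫ f dμ_n ≤ ∫ f dν_n` to the limit.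
A general convex `f` is an increasing limit of maxima of finitely many affine minorants, which are
Lipschitz and convex (`convexOrder_of_lipschitz`).
-/

open MeasureTheory Filter
open scoped RealInnerProductSpace Topology

noncomputable section

open scoped ENNReal NNReal

/-! ### Couplings close to the diagonal under weak convergence -/

/-- Let `g` be a finite partition of unity such that `m` gives each `g i` at least `c` times the mass
given by `μ`. Then there is a coupling of `m` and `μ` which, up to mass `1 - c`, is a sum of multiples
of `(g i • m) ⊗ (g i • μ)`, whose second marginals are the `c • (g i • μ)`. If only the piece `j` can
charge the set `B`, then `B` has mass at most `(1 - c) + ∫ g j dμ`. -/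
theorem exists_coupling_of_partition {X ι : Type*} [MeasurableSpace X] [Fintype ι]
    (m μ : Measure X) [IsProbabilityMeasure m] [IsProbabilityMeasure μ]
    (g : ι → X → ℝ≥0∞) (hg : ∀ i, Measurable (g i)) (hsum : ∀ x, ∑ i, g i x = 1)
    (c : ℝ≥0∞) (hc0 : c ≠ 0) (hc1 : c ≤ 1)
    (hc : ∀ i, c * ∫⁻ x, g i x ∂μ ≤ ∫⁻ x, g i x ∂m)
    (j : ι) (B : Set (X × X)) (hB : MeasurableSet B)
    (hgB : ∀ i, i ≠ j → ∀ p ∈ B, g i p.1 = 0 ∨ g i p.2 = 0) :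
    ∃ π : Measure (X × X), π.map Prod.fst = m ∧ π.map Prod.snd = μ ∧
      π B ≤ (1 - c) + ∫⁻ x, g j x ∂μ := by
  have hle1 : ∀ i x, g i x ≤ 1 := fun i x => by
    rw [← hsum x]; exact Finset.single_le_sum (f := fun i => g i x) (by simp) (Finset.mem_univ i)
  have hfin : ∀ (κ : Measure X) [IsProbabilityMeasure κ] i, ∫⁻ x, g i x ∂κ ≠ ∞ := by
    intro κ _ i
    refine ne_top_of_le_ne_top (b := 1) (by simp) ?_
    calc ∫⁻ x, g i x ∂κ ≤ ∫⁻ x, 1 ∂κ := lintegral_mono (hle1 i)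
      _ = 1 := by simp
  have hdecomp : ∀ (κ : Measure X), ∑ i, κ.withDensity (g i) = κ := by
    intro κ
    ext s hs
    simp only [Measure.coe_finsetSum, Finset.sum_apply, withDensity_apply _ hs]
    rw [← lintegral_finsetSum _ (fun i _ => hg i)]
    simp [hsum]
  have hfm : ∀ i, IsFiniteMeasure (m.withDensity (g i)) := fun i =>
    isFiniteMeasure_withDensity (hfin m i)
  have hfμ : ∀ i, IsFiniteMeasure (μ.withDensity (g i)) := fun i =>
    isFiniteMeasure_withDensity (hfin μ i)
  have hu : ∀ (κ : Measure X) i, κ.withDensity (g i) Set.univ = ∫⁻ x, g i x ∂κ := by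
    intro κ i; simp [withDensity_apply _ MeasurableSet.univ]
  -- `π₁` has second marginal `c • μ` and first marginal at most `m`; the remainder `ρ` of `m` is then
  -- coupled independently with `μ`, which preserves the second marginal.
  set w : ι → ℝ≥0∞ := fun i => c / ∫⁻ x, g i x ∂m with hw
  set π₁ : Measure (X × X) :=
    ∑ i, w i • (m.withDensity (g i)).prod (μ.withDensity (g i)) with hπ₁
  have hfst : π₁.map Prod.fst = ∑ i, (w i * ∫⁻ x, g i x ∂μ) • m.withDensity (g i) := by
    ext s hs
    rw [Measure.map_apply measurable_fst hs]
    simp only [hπ₁, Measure.coe_finsetSum, Finset.sum_apply, Measure.smul_apply, smul_eq_mul]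
    refine Finset.sum_congr rfl fun i _ => ?_
    rw [← Set.prod_univ, Measure.prod_prod, hu]
    ring
  have hsnd : π₁.map Prod.snd = c • μ := by
    rw [← hdecomp (c • μ)]
    ext s hs
    rw [Measure.map_apply measurable_snd hs]
    simp only [hπ₁, Measure.coe_finsetSum, Finset.sum_apply, Measure.smul_apply, smul_eq_mul,
      withDensity_smul_measure]
    refine Finset.sum_congr rfl fun i _ => ?_
    rw [← Set.univ_prod, Measure.prod_prod, hu, ← mul_assoc]
    -- if `g i` has no mass under `m`, the weight is `w i = ∞`, but `g i` has no mass under `μ` either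
    by_cases h0 : ∫⁻ x, g i x ∂m = 0
    · have h1 : ∫⁻ x, g i x ∂μ = 0 := by
        have := hc i
        rw [h0, nonpos_iff_eq_zero, mul_eq_zero] at this
        exact this.resolve_left hc0
      have h2 : μ.withDensity (g i) s = 0 :=
        measure_mono_null (Set.subset_univ s) ((hu μ i).trans h1)
      simp [h2]
    · rw [hw, ENNReal.div_mul_cancel h0 (hfin m i)]
  have hfst_le : π₁.map Prod.fst ≤ m := by
    rw [hfst]
    conv_rhs => rw [← hdecomp m]
    refine Measure.le_iff.2 fun s _ => ?_
    simp only [Measure.coe_finsetSum, Finset.sum_apply, Measure.smul_apply, smul_eq_mul]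
    refine Finset.sum_le_sum fun i _ => mul_le_of_le_one_left (by simp) ?_
    rw [hw, ENNReal.mul_comm_div, ← mul_div_assoc]
    exact ENNReal.div_le_of_le_mul (by simpa using hc i)
  have hmass : π₁ Set.univ = c := by
    have := congrArg (fun κ : Measure X => κ Set.univ) hsnd
    simpa [Measure.map_apply measurable_snd MeasurableSet.univ] using this
  have hmassf : π₁.map Prod.fst Set.univ = c := by
    rw [Measure.map_apply measurable_fst MeasurableSet.univ, Set.preimage_univ, hmass]
  have : IsFiniteMeasure (π₁.map Prod.fst) :=
    ⟨by rw [hmassf]; exact hc1.trans_lt (by simp)⟩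
  set ρ := m - π₁.map Prod.fst with hρ
  have hρu : ρ Set.univ = 1 - c := by
    rw [hρ, Measure.sub_apply MeasurableSet.univ hfst_le, hmassf, measure_univ]
  have : IsFiniteMeasure ρ := ⟨by rw [hρu]; exact tsub_le_self.trans_lt (by simp)⟩
  refine ⟨π₁ + ρ.prod μ, ?_, ?_, ?_⟩
  · rw [Measure.map_add _ _ measurable_fst, Measure.map_fst_prod, measure_univ, one_smul,
      add_comm, hρ, Measure.sub_add_cancel_of_le hfst_le]
  · rw [Measure.map_add _ _ measurable_snd, Measure.map_snd_prod, hsnd, hρu, ← add_smul,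
      add_tsub_cancel_of_le hc1, one_smul]
  · rw [Measure.add_apply, add_comm]
    refine add_le_add ((measure_mono (Set.subset_univ B)).trans ?_) ?_
    · rw [← Set.univ_prod_univ, Measure.prod_prod, hρu, measure_univ, mul_one]
    · simp only [hπ₁, Measure.coe_finsetSum, Finset.sum_apply, Measure.smul_apply, smul_eq_mul]
      rw [Finset.sum_eq_single j]
      · refine (mul_le_mul_right (measure_mono (Set.subset_univ B)) _).trans ?_
        rw [← Set.univ_prod_univ, Measure.prod_prod, hu, hu, ← mul_assoc]
        refine mul_le_of_le_one_left (by simp) ?_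
        rw [mul_comm]
        exact ENNReal.mul_div_le.trans hc1
      · intro i _ hij
        rw [prod_withDensity (hg i) (hg i), withDensity_apply _ hB,
          setLIntegral_eq_zero hB, mul_zero]
        intro p hp
        rcases hgB i hij p hp with h | h <;> simp [h]
      · simp

/-- Weakly convergent probability measures have couplings with the limit that are concentrated near
the diagonal. The partition of unity is subordinate to finitely many balls of radius `δ / 2` covering
a compact set `K` that carries most of `μ`, together with `Kᶜ` (the index `none`). -/
theorem eventually_exists_coupling_of_weak {d : ℕ} {μs : ℕ → ProbabilityMeasure (Rd d)}
    {μ : ProbabilityMeasure (Rd d)} (h : Tendsto μs atTop (𝓝 μ)) {δ : ℝ} (hδ : 0 < δ)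
    {ε : ℝ≥0∞} (hε : ε ≠ 0) (hε1 : ε ≤ 1) :
    ∀ᶠ n in atTop, ∃ π : Measure (Rd d × Rd d), IsCoupling π (μs n) μ ∧
      π {p | δ ≤ ‖p.1 - p.2‖} ≤ ε := by
  have hε2 : ε / 2 ≠ 0 := by simpa using hε
  obtain ⟨K, hK, hμK⟩ := isTightMeasureSet_iff_exists_isCompact_measure_compl_le.1
    (isTightMeasureSet_singleton (μ := (μ : Measure (Rd d)))) (ε / 2) (pos_iff_ne_zero.2 hε2)
  replace hμK := hμK _ rfl
  obtain ⟨t, -, htfin, htK⟩ := hK.finite_cover_balls (half_pos hδ)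
  have := htfin.fintype
  let U : Option t → Set (Rd d) := fun o => o.elim Kᶜ (fun x => Metric.ball x.1 (δ / 2))
  obtain ⟨f, hf⟩ := PartitionOfUnity.exists_isSubordinate (s := Set.univ) isClosed_univ U
    (by rintro (_ | x)
        · exact hK.isClosed.isOpen_compl
        · exact Metric.isOpen_ball)
    (by intro x _
        by_cases hx : x ∈ K
        · obtain ⟨y, hy, hxy⟩ := Set.mem_iUnion₂.1 (htK hx)
          exact Set.mem_iUnion.2 ⟨some ⟨y, hy⟩, hxy⟩
        · exact Set.mem_iUnion.2 ⟨none, hx⟩)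
  have hsupp : ∀ i x, x ∉ U i → f i x = 0 := fun i x hx =>
    image_eq_zero_of_notMem_tsupport fun h => hx (hf i h)
  let g : Option t → Rd d → ℝ≥0∞ := fun i x => ENNReal.ofReal (f i x)
  have hg : ∀ i, Measurable (g i) := fun i => (f i).continuous.measurable.ennreal_ofReal
  have hsum : ∀ x, ∑ i, g i x = 1 := by
    intro x
    rw [← ENNReal.ofReal_sum_of_nonneg fun i _ => f.nonneg i x, ← finsum_eq_sum_of_fintype,
      f.sum_eq_one (Set.mem_univ x), ENNReal.ofReal_one]
  have hlim : ∀ i, Tendsto (fun n => ∫⁻ x, g i x ∂(μs n : Measure (Rd d))) atTop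
      (𝓝 (∫⁻ x, g i x ∂(μ : Measure (Rd d)))) := by
    intro i
    let b : BoundedContinuousFunction (Rd d) ℝ≥0 :=
      BoundedContinuousFunction.mkOfBound ⟨fun x => (f i x).toNNReal, by fun_prop⟩ 1 (by
        intro x y
        refine Real.dist_le_of_mem_Icc_01 ⟨by simp, ?_⟩ ⟨by simp, ?_⟩ <;>
        simpa using f.le_one i _)
    exact ProbabilityMeasure.tendsto_iff_forall_lintegral_tendsto.1 h b
  have hfin : ∀ i, ∫⁻ x, g i x ∂(μ : Measure (Rd d)) ≠ ∞ := by
    intro i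
    refine ne_top_of_le_ne_top (b := 1) (by simp) ?_
    calc ∫⁻ x, g i x ∂(μ : Measure (Rd d)) ≤ ∫⁻ x, 1 ∂(μ : Measure (Rd d)) :=
          lintegral_mono fun x => by simpa [g] using f.le_one i x
      _ = 1 := by simp
  have hεhalf : ε / 2 ≤ 1 := ENNReal.half_le_self.trans hε1
  have hc1 : 1 - ε / 2 < 1 := ENNReal.sub_lt_self (by simp) (by simp) hε2
  have hev : ∀ᶠ n in atTop, ∀ i, (1 - ε / 2) * ∫⁻ x, g i x ∂(μ : Measure (Rd d)) ≤
      ∫⁻ x, g i x ∂(μs n : Measure (Rd d)) := by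
    refine eventually_all.2 fun i => ?_
    by_cases h0 : ∫⁻ x, g i x ∂(μ : Measure (Rd d)) = 0
    · simp [h0]
    · have : (1 - ε / 2) * ∫⁻ x, g i x ∂(μ : Measure (Rd d)) <
          ∫⁻ x, g i x ∂(μ : Measure (Rd d)) := by
        conv_rhs => rw [← one_mul (∫⁻ x, g i x ∂(μ : Measure (Rd d)))]
        exact (ENNReal.mul_lt_mul_iff_left h0 (hfin i)).2 hc1
      exact ((hlim i).eventually (lt_mem_nhds this)).mono fun n hn => hn.le
  filter_upwards [hev] with n hn
  obtain ⟨π, h1, h2, h3⟩ := exists_coupling_of_partition (μs n : Measure (Rd d)) μ g hg hsum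
    (1 - ε / 2) (by
      have : ε / 2 < 1 := (ENNReal.half_lt_self hε (ne_top_of_le_ne_top (by simp) hε1)).trans_le hε1
      exact (tsub_pos_of_lt this).ne') hc1.le hn none {p | δ ≤ ‖p.1 - p.2‖}
    (measurableSet_le measurable_const (by fun_prop)) (by
      rintro (_ | x) hi p hp
      · exact absurd rfl hi
      · by_contra! hne
        have hb : ∀ y, g (some x) y ≠ 0 → y ∈ Metric.ball x.1 (δ / 2) := fun y hy => by
          by_contra hy'
          exact hy (by simp [g, hsupp (some x) y hy'])
        have a1 := hb _ hne.1
        have a2 := hb _ hne.2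
        rw [Metric.mem_ball] at a1 a2
        have := dist_triangle_right p.1 p.2 x.1
        rw [Set.mem_ofPred_eq, ← dist_eq_norm] at hp
        linarith)
  refine ⟨π, ⟨h1, h2⟩, h3.trans ?_⟩
  rw [ENNReal.sub_sub_cancel (by simp) hεhalf]
  calc ε / 2 + ∫⁻ x, g none x ∂(μ : Measure (Rd d)) ≤ ε / 2 + ε / 2 := by
        gcongr
        refine le_trans ?_ hμK
        rw [← lintegral_indicator_one hK.isClosed.isOpen_compl.measurableSet]
        refine lintegral_mono fun x => ?_
        by_cases hx : x ∈ Kᶜ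
        · simpa [Set.indicator_of_mem hx, g] using f.le_one none x
        · simp [g, hsupp none x hx]
    _ = ε := ENNReal.add_halves ε

/-! ### Tails of the second moment -/

/-- The squared distance from `x` to the closed ball of radius `R ≥ 0` about the origin. It is
convex, and its integrals measure the tails of the second moment. -/
def excess {d : ℕ} (R : ℝ) (x : Rd d) : ℝ := max (‖x‖ - R) 0 ^ 2

theorem excess_nonneg {d : ℕ} (R : ℝ) (x : Rd d) : 0 ≤ excess R x := sq_nonneg _

theorem excess_zero {d : ℕ} (x : Rd d) : excess 0 x = ‖x‖ ^ 2 := by simp [excess]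

theorem excess_le {d : ℕ} {R : ℝ} (hR : 0 ≤ R) (x : Rd d) : excess R x ≤ ‖x‖ ^ 2 := by
  unfold excess
  gcongr
  exact max_le (by linarith) (norm_nonneg x)

theorem continuous_excess {d : ℕ} (R : ℝ) : Continuous (excess R : Rd d → ℝ) := by
  unfold excess; fun_prop

theorem convexOn_excess {d : ℕ} (R : ℝ) : ConvexOn ℝ Set.univ (excess R : Rd d → ℝ) := by
  have h1 : ConvexOn ℝ Set.univ (fun x : Rd d => ‖x‖ - R) := by
    simpa only [sub_eq_add_neg] using! (convexOn_univ_norm (E := Rd d)).add_const (-R)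
  exact (h1.sup (convexOn_const 0 convex_univ)).pow (fun x _ => le_max_right _ _) 2

theorem FiniteSecondMoment.integrable_excess {d : ℕ} {μ : Measure (Rd d)}
    (h : FiniteSecondMoment μ) {R : ℝ} (hR : 0 ≤ R) : Integrable (excess R) μ :=
  Integrable.mono' h (continuous_excess R).aestronglyMeasurable
    (ae_of_all _ fun x => by
      rw [Real.norm_of_nonneg (excess_nonneg R x)]; exact excess_le hR x)

theorem tendsto_integral_excess {d : ℕ} {μ : Measure (Rd d)} (h : FiniteSecondMoment μ) :
    Tendsto (fun R : ℕ => ∫ x, excess (R : ℝ) x ∂μ) atTop (𝓝 0) := by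
  have := tendsto_integral_of_dominated_convergence (μ := μ) (f := fun _ => (0 : ℝ))
    (F := fun (R : ℕ) x => excess (R : ℝ) x) (fun x => ‖x‖ ^ 2)
    (fun R => (continuous_excess _).aestronglyMeasurable) h
    (fun R => ae_of_all _ fun x => by
      rw [Real.norm_of_nonneg (excess_nonneg _ x)]; exact excess_le R.cast_nonneg x)
    (ae_of_all _ fun x => by
      refine tendsto_const_nhds.congr' ?_
      filter_upwards [eventually_ge_atTop ⌈‖x‖⌉₊] with R hR
      have : ‖x‖ ≤ R := (Nat.le_ceil _).trans (by exact_mod_cast hR)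
      simp [excess, this])
  simpa using this

/-! ### Couplings and the transport cost -/

theorem IsCoupling.fst {d : ℕ} {π : Measure (Rd d × Rd d)} {m μ : Measure (Rd d)}
    (h : IsCoupling π m μ) : MeasurePreserving Prod.fst π m := ⟨measurable_fst, h.1⟩

theorem IsCoupling.snd {d : ℕ} {π : Measure (Rd d × Rd d)} {m μ : Measure (Rd d)}
    (h : IsCoupling π m μ) : MeasurePreserving Prod.snd π μ := ⟨measurable_snd, h.2⟩

theorem IsCoupling.isProbabilityMeasure {d : ℕ} {π : Measure (Rd d × Rd d)} {m μ : Measure (Rd d)}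
    [IsProbabilityMeasure m] (h : IsCoupling π m μ) : IsProbabilityMeasure π :=
  ⟨by rw [← Set.preimage_univ (f := Prod.fst), h.fst.measure_preimage (by simp), measure_univ]⟩

theorem IsCoupling.integral_fst {d : ℕ} {π : Measure (Rd d × Rd d)} {m μ : Measure (Rd d)}
    (h : IsCoupling π m μ) {f : Rd d → ℝ} (hf : Continuous f) :
    ∫ p, f p.1 ∂π = ∫ x, f x ∂m := by
  rw [← h.1, integral_map measurable_fst.aemeasurable hf.aestronglyMeasurable]

theorem IsCoupling.integral_snd {d : ℕ} {π : Measure (Rd d × Rd d)} {m μ : Measure (Rd d)}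
    (h : IsCoupling π m μ) {f : Rd d → ℝ} (hf : Continuous f) :
    ∫ p, f p.2 ∂π = ∫ x, f x ∂μ := by
  rw [← h.2, integral_map measurable_snd.aemeasurable hf.aestronglyMeasurable]

theorem IsCoupling.integrable_fst {d : ℕ} {π : Measure (Rd d × Rd d)} {m μ : Measure (Rd d)}
    (h : IsCoupling π m μ) {f : Rd d → ℝ} (hf : Integrable f m) :
    Integrable (fun p : Rd d × Rd d => f p.1) π := h.fst.integrable_comp_of_integrable hf

theorem IsCoupling.integrable_snd {d : ℕ} {π : Measure (Rd d × Rd d)} {m μ : Measure (Rd d)}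
    (h : IsCoupling π m μ) {f : Rd d → ℝ} (hf : Integrable f μ) :
    Integrable (fun p : Rd d × Rd d => f p.2) π := h.snd.integrable_comp_of_integrable hf

theorem IsCoupling.integrable_cost {d : ℕ} {π : Measure (Rd d × Rd d)} {m μ : Measure (Rd d)}
    (h : IsCoupling π m μ) (hm : FiniteSecondMoment m) (hμ : FiniteSecondMoment μ) :
    Integrable (fun p : Rd d × Rd d => ‖p.1 - p.2‖ ^ 2) π := by
  refine Integrable.mono' (((h.integrable_fst hm).add (h.integrable_snd hμ)).const_mul 2)
    (by fun_prop) (ae_of_all _ fun p => ?_)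
  rw [Real.norm_of_nonneg (by positivity)]
  have h1 : ‖p.1 - p.2‖ ^ 2 ≤ (‖p.1‖ + ‖p.2‖) ^ 2 := by gcongr; exact norm_sub_le _ _
  simp only [Pi.add_apply]
  nlinarith [sq_nonneg (‖p.1‖ - ‖p.2‖)]

theorem exists_coupling_of_W2_lt {d : ℕ} {m μ : Measure (Rd d)} [IsProbabilityMeasure m]
    [IsProbabilityMeasure μ] {ε : ℝ} (hε : 0 < ε) (h : W2 m μ < ε) :
    ∃ π, IsCoupling π m μ ∧ ∫ p, ‖p.1 - p.2‖ ^ 2 ∂π < ε ^ 2 := by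
  rw [W2, Real.sqrt_lt' hε] at h
  obtain ⟨_, ⟨π, hπ, rfl⟩, hlt⟩ := exists_lt_of_csInf_lt
    (Set.Nonempty.image _ (show {π | IsCoupling π m μ}.Nonempty from
      ⟨m.prod μ, by simp [IsCoupling]⟩)) h
  exact ⟨π, hπ, hlt⟩

theorem IsCoupling.W2_le {d : ℕ} {π : Measure (Rd d × Rd d)} {m μ : Measure (Rd d)}
    (h : IsCoupling π m μ) {ε : ℝ} (hε : 0 ≤ ε) (hle : ∫ p, ‖p.1 - p.2‖ ^ 2 ∂π ≤ ε ^ 2) :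
    W2 m μ ≤ ε := by
  rw [W2]
  refine Real.sqrt_le_iff.2 ⟨hε, le_trans ?_ hle⟩
  refine csInf_le ⟨0, ?_⟩ ⟨π, h, rfl⟩
  rintro _ ⟨κ, -, rfl⟩
  exact integral_nonneg fun p => by positivity

/-- The tail functional is controlled along a coupling, since the distance to a ball is
`1`-Lipschitz. -/
theorem IsCoupling.integral_excess_le {d : ℕ} {π : Measure (Rd d × Rd d)} {m μ : Measure (Rd d)}
    (h : IsCoupling π m μ) (hm : FiniteSecondMoment m) (hμ : FiniteSecondMoment μ)
    {R : ℝ} (hR : 0 ≤ R) :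
    ∫ x, excess R x ∂m ≤ 2 * ∫ x, excess R x ∂μ + 2 * ∫ p, ‖p.1 - p.2‖ ^ 2 ∂π := by
  have i2 := h.integrable_snd (hμ.integrable_excess hR)
  have i3 := h.integrable_cost hm hμ
  rw [← h.integral_fst (continuous_excess R), ← h.integral_snd (continuous_excess R),
    ← integral_const_mul, ← integral_const_mul, ← integral_add (i2.const_mul 2) (i3.const_mul 2)]
  refine integral_mono (h.integrable_fst (hm.integrable_excess hR))
    ((i2.const_mul 2).add (i3.const_mul 2)) fun p => ?_
  have h1 : max (‖p.1‖ - R) 0 ≤ max (‖p.2‖ - R) 0 + ‖p.1 - p.2‖ := by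
    refine max_le ?_ (by positivity)
    have := norm_le_norm_add_norm_sub' p.1 p.2
    linarith [le_max_left (‖p.2‖ - R) 0]
  have h2 : (0 : ℝ) ≤ max (‖p.1‖ - R) 0 := le_max_right _ _
  simp only [excess]
  nlinarith [sq_nonneg (max (‖p.2‖ - R) 0 - ‖p.1 - p.2‖), pow_le_pow_left₀ h2 h1 2]

/-- The transport cost of a coupling is small as soon as the coupling is concentrated near the
diagonal and both marginals have small tails. On `δ ≤ ‖x - y‖` one uses
`‖x - y‖ ≤ 2R + (‖x‖ - R)₊ + (‖y‖ - R)₊` and `(a + b + c)² ≤ 3 (a² + b² + c²)`. -/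
theorem IsCoupling.integral_cost_le {d : ℕ} {π : Measure (Rd d × Rd d)} {m μ : Measure (Rd d)}
    [IsProbabilityMeasure m]
    (h : IsCoupling π m μ) (hm : FiniteSecondMoment m) (hμ : FiniteSecondMoment μ)
    {R δ : ℝ} (hR : 0 ≤ R) :
    ∫ p, ‖p.1 - p.2‖ ^ 2 ∂π ≤ 3 * δ ^ 2 + 12 * R ^ 2 * π.real {p | δ ≤ ‖p.1 - p.2‖} +
      3 * ∫ x, excess R x ∂m + 3 * ∫ x, excess R x ∂μ := by
  have := h.isProbabilityMeasure
  set B : Set (Rd d × Rd d) := {p | δ ≤ ‖p.1 - p.2‖} with hBdef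
  have hB : MeasurableSet B := measurableSet_le measurable_const (by fun_prop)
  have i0 : Integrable (fun _ : Rd d × Rd d => 3 * δ ^ 2) π := integrable_const _
  have i1 : Integrable (fun p : Rd d × Rd d => 12 * R ^ 2 * B.indicator 1 p) π :=
    ((integrable_const (1 : ℝ)).indicator hB).const_mul _
  have i2 := (h.integrable_fst (hm.integrable_excess hR)).const_mul 3
  have i3 := (h.integrable_snd (hμ.integrable_excess hR)).const_mul 3
  have i01 : Integrable (fun p => 3 * δ ^ 2 + 12 * R ^ 2 * B.indicator 1 p) π := i0.add i1
  have i012 : Integrable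
      (fun p => 3 * δ ^ 2 + 12 * R ^ 2 * B.indicator 1 p + 3 * excess R p.1) π := i01.add i2
  calc ∫ p, ‖p.1 - p.2‖ ^ 2 ∂π
      ≤ ∫ p, (3 * δ ^ 2 + 12 * R ^ 2 * B.indicator 1 p + 3 * excess R p.1 +
          3 * excess R p.2) ∂π := by
        refine integral_mono (h.integrable_cost hm hμ) (i012.add i3) fun p => ?_
        have ha : (0 : ℝ) ≤ max (‖p.1‖ - R) 0 := le_max_right _ _
        have hb : (0 : ℝ) ≤ max (‖p.2‖ - R) 0 := le_max_right _ _
        simp only [excess]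
        by_cases hp : p ∈ B
        · rw [Set.indicator_of_mem hp]
          have h1 : ‖p.1 - p.2‖ ≤ 2 * R + max (‖p.1‖ - R) 0 + max (‖p.2‖ - R) 0 := by
            linarith [norm_sub_le p.1 p.2, le_max_left (‖p.1‖ - R) 0, le_max_left (‖p.2‖ - R) 0]
          have h2 := pow_le_pow_left₀ (norm_nonneg (p.1 - p.2)) h1 2
          simp only [Pi.one_apply]
          nlinarith [sq_nonneg (2 * R - max (‖p.1‖ - R) 0), sq_nonneg (2 * R - max (‖p.2‖ - R) 0),
            sq_nonneg (max (‖p.1‖ - R) 0 - max (‖p.2‖ - R) 0), sq_nonneg δ]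
        · rw [Set.indicator_of_notMem hp]
          have h1 : ‖p.1 - p.2‖ < δ := not_le.1 hp
          have h2 := pow_le_pow_left₀ (norm_nonneg (p.1 - p.2)) h1.le 2
          nlinarith [sq_nonneg δ, sq_nonneg (max (‖p.1‖ - R) 0), sq_nonneg (max (‖p.2‖ - R) 0)]
    _ = _ := by
        rw [integral_add i012 i3, integral_add i01 i2, integral_add i0 i1,
          integral_const_mul (12 * R ^ 2), integral_const_mul 3 fun p : Rd d × Rd d => excess R p.1,
          integral_const_mul 3 fun p : Rd d × Rd d => excess R p.2, integral_indicator_one hB,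
          h.integral_fst (continuous_excess R), h.integral_snd (continuous_excess R)]
        simp

/-! ### Lipschitz test functions and the convex order -/

theorem integrable_of_lipschitz {d : ℕ} {μ : Measure (Rd d)} [IsProbabilityMeasure μ]
    (hμ : FiniteSecondMoment μ) {f : Rd d → ℝ} {L : ℝ≥0} (hf : LipschitzWith L f) :
    Integrable f μ := by
  refine Integrable.mono' (((integrable_const (1 : ℝ)).add hμ).const_mul (L : ℝ) |>.add
    (integrable_const |f 0|)) hf.continuous.aestronglyMeasurable (ae_of_all _ fun x => ?_)
  have h1 : |f x - f 0| ≤ L * ‖x‖ := by simpa [Real.dist_eq] using hf.dist_le_mul x 0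
  have h2 : ‖x‖ ≤ 1 + ‖x‖ ^ 2 := by nlinarith [sq_nonneg (‖x‖ - 1)]
  have h3 := mul_le_mul_of_nonneg_left h2 L.coe_nonneg
  have h4 : |f x| ≤ |f x - f 0| + |f 0| := by simpa using abs_add_le (f x - f 0) (f 0)
  simp only [Pi.add_apply, Real.norm_eq_abs]
  linarith

/-- Integrals of Lipschitz functions are controlled by the quadratic transport cost. The factor `2`
comes from `t ≤ ε + t² / ε`, used in place of the Cauchy–Schwarz inequality. -/
theorem IsCoupling.abs_integral_sub_le {d : ℕ} {π : Measure (Rd d × Rd d)} {m μ : Measure (Rd d)}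
    [IsProbabilityMeasure m] [IsProbabilityMeasure μ]
    (h : IsCoupling π m μ) (hm : FiniteSecondMoment m) (hμ : FiniteSecondMoment μ)
    {f : Rd d → ℝ} {L : ℝ≥0} (hf : LipschitzWith L f) {ε : ℝ} (hε : 0 < ε)
    (hcost : ∫ p, ‖p.1 - p.2‖ ^ 2 ∂π ≤ ε ^ 2) :
    |∫ x, f x ∂m - ∫ x, f x ∂μ| ≤ L * (2 * ε) := by
  have := h.isProbabilityMeasure
  have i3 := h.integrable_cost hm hμ
  have i4 : Integrable (fun p : Rd d × Rd d => L * (ε + ε⁻¹ * ‖p.1 - p.2‖ ^ 2)) π :=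
    ((integrable_const ε).add (i3.const_mul ε⁻¹)).const_mul _
  rw [← h.integral_fst hf.continuous, ← h.integral_snd hf.continuous,
    ← integral_sub (h.integrable_fst (integrable_of_lipschitz hm hf))
      (h.integrable_snd (integrable_of_lipschitz hμ hf))]
  calc |∫ p, (f p.1 - f p.2) ∂π| ≤ ∫ p : Rd d × Rd d, L * (ε + ε⁻¹ * ‖p.1 - p.2‖ ^ 2) ∂π := by
        rw [← Real.norm_eq_abs]
        refine norm_integral_le_of_norm_le i4 (ae_of_all _ fun p => ?_)
        refine (by simpa [Real.dist_eq, dist_eq_norm] using hf.dist_le_mul p.1 p.2 :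
          ‖f p.1 - f p.2‖ ≤ L * ‖p.1 - p.2‖).trans ?_
        gcongr
        -- `t ≤ ε + t² / ε` for `ε > 0`
        have : ε * ‖p.1 - p.2‖ ≤ ε * (ε + ε⁻¹ * ‖p.1 - p.2‖ ^ 2) := by
          rw [mul_add, ← mul_assoc, mul_inv_cancel₀ hε.ne']
          nlinarith [sq_nonneg (ε - ‖p.1 - p.2‖), norm_nonneg (p.1 - p.2)]
        exact le_of_mul_le_mul_left this hε
    _ = L * (ε + ε⁻¹ * ∫ p, ‖p.1 - p.2‖ ^ 2 ∂π) := by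
        rw [integral_const_mul, integral_add (integrable_const ε) (i3.const_mul ε⁻¹),
          integral_const_mul]
        simp
    _ ≤ L * (ε + ε⁻¹ * ε ^ 2) := by gcongr
    _ = L * (2 * ε) := by field_simp; ring

theorem tendsto_integral_of_tendsto_W2 {d : ℕ} {ms : ℕ → Measure (Rd d)} {μ : Measure (Rd d)}
    [∀ n, IsProbabilityMeasure (ms n)] [IsProbabilityMeasure μ]
    (hms : ∀ n, FiniteSecondMoment (ms n)) (hμ : FiniteSecondMoment μ)
    (h : Tendsto (fun n => W2 (ms n) μ) atTop (𝓝 0))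
    {f : Rd d → ℝ} {L : ℝ≥0} (hf : LipschitzWith L f) :
    Tendsto (fun n => ∫ x, f x ∂(ms n)) atTop (𝓝 (∫ x, f x ∂μ)) := by
  refine Metric.tendsto_nhds.2 fun ε hε => ?_
  have hη : 0 < ε / (2 * (L + 1)) := by positivity
  filter_upwards [h.eventually (gt_mem_nhds hη)] with n hn
  obtain ⟨π, hπ, hc⟩ := exists_coupling_of_W2_lt hη hn
  refine (hπ.abs_integral_sub_le (hms n) hμ hf hη hc.le).trans_lt ?_
  have hL : (0 : ℝ) ≤ L := L.coe_nonneg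
  rw [show (L : ℝ) * (2 * (ε / (2 * (L + 1)))) = ε * (L / (L + 1)) by field_simp]
  have : (L : ℝ) / (L + 1) < 1 := (div_lt_one (by positivity)).2 (by linarith)
  nlinarith

/-- The convex order only has to be tested on Lipschitz convex functions: a convex function is the
increasing limit of finite maxima of affine minorants, and these maxima lie between one affine
function and the function itself, so dominated convergence applies. -/
theorem convexOrder_of_lipschitz {d : ℕ} {μ ν : Measure (Rd d)}
    [IsProbabilityMeasure μ] [IsProbabilityMeasure ν]
    (hμ : FiniteSecondMoment μ) (hν : FiniteSecondMoment ν)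
    (h : ∀ (f : Rd d → ℝ) (L : ℝ≥0), ConvexOn ℝ Set.univ f → LipschitzWith L f →
      ∫ x, f x ∂μ ≤ ∫ x, f x ∂ν) : ConvexOrder μ ν := by
  intro f hf hfμ hfν
  have hfc : Continuous f := by
    rw [← continuousOn_univ]; exact hf.continuousOn isOpen_univ
  obtain ⟨l, c, hle, hsup⟩ := hf.real_univ_sSup_of_nat_affine_eq hfc.lowerSemicontinuous
  set a : ℕ → Rd d → ℝ := fun i x => l i x + c i with ha
  set F : ℕ → Rd d → ℝ := fun k => partialSups a k with hF
  have haf : ∀ i x, a i x ≤ f x := fun i x => hle i x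
  have hsupx : ∀ x, ⨆ i, a i x = f x := fun x => by
    rw [← hsup, iSup_apply]; rfl
  have haconv : ∀ i, ConvexOn ℝ Set.univ (a i) := fun i =>
    ((l i).toLinearMap.convexOn convex_univ).add_const (c i)
  have halip : ∀ i, LipschitzWith ‖l i‖₊ (a i) := fun i => by
    refine LipschitzWith.of_dist_le_mul fun x y => ?_
    simpa [ha] using (l i).lipschitz.dist_le_mul x y
  have hFconv : ∀ k, ConvexOn ℝ Set.univ (F k) := by
    intro k
    induction k with
    | zero => simpa [hF] using haconv 0
    | succ k ih => simp only [hF, partialSups_add_one]; exact ih.sup (haconv _)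
  have hFlip : ∀ k, ∃ L, LipschitzWith L (F k) := by
    intro k
    induction k with
    | zero => exact ⟨_, by simpa [hF] using halip 0⟩
    | succ k ih =>
      obtain ⟨L, hL⟩ := ih
      simp only [hF, partialSups_add_one]
      exact ⟨_, hL.max (halip _)⟩
  have hFf : ∀ k x, F k x ≤ f x := fun k x => by
    simp only [hF, Pi.partialSups_apply]
    exact partialSups_le _ _ _ fun i _ => haf i x
  have hF0 : ∀ k x, a 0 x ≤ F k x := fun k x => le_partialSups_of_le a (Nat.zero_le k) x
  have hlim : ∀ x, Tendsto (fun k => F k x) atTop (𝓝 (f x)) := by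
    intro x
    have hbdd : BddAbove (Set.range fun i => a i x) := ⟨f x, by rintro _ ⟨i, rfl⟩; exact haf i x⟩
    have := tendsto_atTop_ciSup (partialSups fun i => a i x).monotone
      (bddAbove_range_partialSups.2 hbdd)
    rw [ciSup_partialSups_eq hbdd, hsupx] at this
    simpa only [hF, Pi.partialSups_apply] using this
  have key : ∀ (κ : Measure (Rd d)) [IsProbabilityMeasure κ], FiniteSecondMoment κ →
      Integrable f κ → Tendsto (fun k => ∫ x, F k x ∂κ) atTop (𝓝 (∫ x, f x ∂κ)) := by
    intro κ _ hκ hfκ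
    refine tendsto_integral_of_dominated_convergence (fun x => |a 0 x| + |f x|) (fun k => ?_)
      ((integrable_of_lipschitz hκ (halip 0)).abs.add hfκ.abs) (fun k => ae_of_all _ fun x => ?_)
      (ae_of_all _ hlim)
    · obtain ⟨L, hL⟩ := hFlip k
      exact hL.continuous.aestronglyMeasurable
    · rw [Real.norm_eq_abs, abs_le]
      constructor
      · linarith [hF0 k x, neg_abs_le (a 0 x), abs_nonneg (f x)]
      · linarith [hFf k x, le_abs_self (f x), abs_nonneg (a 0 x)]
  refine le_of_tendsto_of_tendsto' (key μ hμ hfμ) (key ν hν hfν) fun k => ?_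
  obtain ⟨L, hL⟩ := hFlip k
  exact h _ L (hFconv k) hL

/-! ### Weak limits and `W₂`-convergence -/

/-- Uniformly bounded second moments give tightness by Markov's inequality, hence a weakly convergent
subsequence by Prokhorov's theorem. -/
theorem exists_weak_limit {d : ℕ} (μs : ℕ → ProbabilityMeasure (Rd d)) (C : ℝ)
    (hmom₂ : ∀ n, FiniteSecondMoment (μs n : Measure (Rd d)))
    (hC : ∀ n, ∫ x, ‖x‖ ^ 2 ∂(μs n : Measure (Rd d)) ≤ C) :
    ∃ (μ : ProbabilityMeasure (Rd d)) (φ : ℕ → ℕ), StrictMono φ ∧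
      Tendsto (μs ∘ φ) atTop (𝓝 μ) := by
  have htight : IsTightMeasureSet
      {((μ : ProbabilityMeasure (Rd d)) : Measure (Rd d)) | μ ∈ Set.range μs} := by
    refine isTightMeasureSet_iff_exists_isCompact_measure_compl_le.2 fun ε hε => ?_
    obtain ⟨r, hr0, hr⟩ : ∃ r : ℝ, 0 < r ∧ ENNReal.ofReal (C / r ^ 2) ≤ ε := by
      have : Tendsto (fun r : ℝ => ENNReal.ofReal (C / r ^ 2)) atTop (𝓝 (ENNReal.ofReal 0)) :=
        (ENNReal.continuous_ofReal.tendsto 0).comp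
          (Tendsto.const_div_atTop (tendsto_pow_atTop two_ne_zero) C)
      rw [ENNReal.ofReal_zero] at this
      obtain ⟨r, h1, h2⟩ := ((eventually_gt_atTop 0).and (this.eventually (gt_mem_nhds hε))).exists
      exact ⟨r, h1, h2.le⟩
    refine ⟨Metric.closedBall 0 r, isCompact_closedBall 0 r, ?_⟩
    rintro _ ⟨_, ⟨n, rfl⟩, rfl⟩
    refine le_trans ?_ hr
    have hsub : (Metric.closedBall (0 : Rd d) r)ᶜ ⊆ {x | r ^ 2 ≤ ‖x‖ ^ 2} := by
      intro x hx
      have : r < ‖x‖ := by simpa using hx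
      exact pow_le_pow_left₀ hr0.le this.le 2
    refine (measure_mono hsub).trans ?_
    have hM := mul_meas_ge_le_integral_of_nonneg (μ := (μs n : Measure (Rd d)))
      (f := fun x => ‖x‖ ^ 2) (ae_of_all _ fun x => by positivity) (hmom₂ n) (r ^ 2)
    rw [← ofReal_measureReal]
    refine ENNReal.ofReal_le_ofReal ?_
    rw [le_div_iff₀ (by positivity), mul_comm]
    exact hM.trans (hC n)
  obtain ⟨μ, -, φ, hφ, hlim⟩ := (isCompact_closure_of_isTightMeasureSet htight).tendsto_subseq
    (x := μs) fun n => subset_closure (Set.mem_range_self n)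
  exact ⟨μ, φ, hφ, hlim⟩

/-- Lower semicontinuity of the tail functionals under weak convergence. -/
theorem integral_excess_le_of_weak {d : ℕ} {μs : ℕ → ProbabilityMeasure (Rd d)}
    {μ : ProbabilityMeasure (Rd d)} (h : Tendsto μs atTop (𝓝 μ))
    (hmom₂ : ∀ n, FiniteSecondMoment (μs n : Measure (Rd d))) {R K : ℝ} (hR : 0 ≤ R) (hK0 : 0 ≤ K)
    (hK : ∀ᶠ n in atTop, ∫ x, excess R x ∂(μs n : Measure (Rd d)) ≤ K) :
    Integrable (excess R) (μ : Measure (Rd d)) ∧ ∫ x, excess R x ∂(μ : Measure (Rd d)) ≤ K := by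
  have hle : ∫⁻ x, ENNReal.ofReal (excess R x) ∂(μ : Measure (Rd d)) ≤ ENNReal.ofReal K := by
    refine (lintegral_le_liminf_lintegral_of_forall_isOpen_measure_le_liminf_measure
      (μs := fun n => (μs n : Measure (Rd d))) (continuous_excess R) (excess_nonneg R)
      fun G hG => ProbabilityMeasure.le_liminf_measure_open_of_tendsto h hG).trans ?_
    refine liminf_le_of_frequently_le' (Eventually.frequently ?_)
    filter_upwards [hK] with n hn
    rw [← ofReal_integral_eq_lintegral_ofReal ((hmom₂ n).integrable_excess hR)
      (ae_of_all _ (excess_nonneg R))]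
    exact ENNReal.ofReal_le_ofReal hn
  have hi : Integrable (excess R) (μ : Measure (Rd d)) :=
    (lintegral_ofReal_ne_top_iff_integrable (continuous_excess R).aestronglyMeasurable
      (ae_of_all _ (excess_nonneg R))).1 (ne_top_of_le_ne_top (by simp) hle)
  refine ⟨hi, ?_⟩
  rw [← ofReal_integral_eq_lintegral_ofReal hi (ae_of_all _ (excess_nonneg R))] at hle
  exact (ENNReal.ofReal_le_ofReal_iff hK0).1 hle

/-- Weak convergence together with uniformly small second-moment tails implies `W₂`-convergence. -/
theorem tendsto_W2_of_weak {d : ℕ} {μs : ℕ → ProbabilityMeasure (Rd d)}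
    {μ : ProbabilityMeasure (Rd d)} (h : Tendsto μs atTop (𝓝 μ))
    (hmom₂ : ∀ n, FiniteSecondMoment (μs n : Measure (Rd d)))
    (hμ : FiniteSecondMoment (μ : Measure (Rd d)))
    (htail : ∀ η > 0, ∃ R : ℝ, 0 ≤ R ∧
      ∀ᶠ n in atTop, ∫ x, excess R x ∂(μs n : Measure (Rd d)) ≤ η) :
    Tendsto (fun n => W2 (μs n : Measure (Rd d)) μ) atTop (𝓝 0) := by
  refine Metric.tendsto_nhds.2 fun ε hε => ?_
  set e := ε / 2 with he
  have he0 : 0 < e := half_pos hε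
  obtain ⟨R, hR, hev⟩ := htail (e ^ 2 / 12) (by positivity)
  have hμR := (integral_excess_le_of_weak h hmom₂ hR (by positivity) hev).2
  set q : ℝ := min 1 (e ^ 2 / (48 * (R ^ 2 + 1))) with hq
  have hq0 : 0 < q := lt_min one_pos (by positivity)
  have hδ : 0 < e / 4 := by positivity
  filter_upwards [hev, eventually_exists_coupling_of_weak h hδ
    (ε := ENNReal.ofReal q) (by simpa using hq0) (by simp [hq])] with n hn ⟨π, hπ, hπB⟩
  have hreal : π.real {p | e / 4 ≤ ‖p.1 - p.2‖} ≤ q := ENNReal.toReal_le_of_le_ofReal hq0.le hπB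
  have hcost := hπ.integral_cost_le (δ := e / 4) (hmom₂ n) hμ hR
  have h12 : 12 * R ^ 2 * π.real {p | e / 4 ≤ ‖p.1 - p.2‖} ≤ e ^ 2 / 4 := by
    calc 12 * R ^ 2 * π.real {p | e / 4 ≤ ‖p.1 - p.2‖}
        ≤ 12 * (R ^ 2 + 1) * (e ^ 2 / (48 * (R ^ 2 + 1))) := by
          gcongr
          · linarith
          · exact hreal.trans (min_le_right _ _)
      _ = e ^ 2 / 4 := by field_simp; norm_num
  have hW : W2 (μs n : Measure (Rd d)) μ ≤ e := hπ.W2_le he0.le (by nlinarith [sq_nonneg e])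
  rw [Real.dist_eq, sub_zero, abs_of_nonneg (show 0 ≤ W2 _ _ from Real.sqrt_nonneg _)]
  linarith

/-- If `W₂(ν_n, ν) → 0` and `μ_n ≤_c ν_n` for all `n`, then `(μ_n)` is `W₂`-precompact, with a
subsequence converging in `W₂` to some `μ ∈ P₂(ℝ^d)` with `μ ≤_c ν`. -/
theorem stmt_3 {d : ℕ} (ν : Measure (Rd d)) [IsProbabilityMeasure ν]
    (hν2 : FiniteSecondMoment ν)
    (νs : ℕ → Measure (Rd d))
    (hνprob : ∀ n, IsProbabilityMeasure (νs n))
    (hνmom : ∀ n, FiniteSecondMoment (νs n))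
    (hνconv : Tendsto (fun n => W2 (νs n) ν) atTop (𝓝 0))
    (μs : ℕ → Measure (Rd d))
    (hμprob : ∀ n, IsProbabilityMeasure (μs n))
    (hμmom : ∀ n, FiniteSecondMoment (μs n))
    (hord : ∀ n, ConvexOrder (μs n) (νs n)) :
    ∃ (μ : Measure (Rd d)) (φ : ℕ → ℕ), StrictMono φ ∧
      IsProbabilityMeasure μ ∧ FiniteSecondMoment μ ∧ ConvexOrder μ ν ∧
      Tendsto (fun k => W2 (μs (φ k)) μ) atTop (𝓝 0) := by
  have hexc : ∀ n, ∀ R : ℝ, 0 ≤ R → ∀ ε > 0, W2 (νs n) ν < ε →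
      ∫ x, excess R x ∂(μs n) ≤ 2 * ∫ x, excess R x ∂ν + 2 * ε ^ 2 := by
    intro n R hR ε hε hW
    obtain ⟨π, hπ, hc⟩ := exists_coupling_of_W2_lt hε hW
    have h1 := hord n _ (convexOn_excess R) ((hμmom n).integrable_excess hR)
      ((hνmom n).integrable_excess hR)
    have h2 := hπ.integral_excess_le (hνmom n) hν2 hR
    linarith
  have hW0 : ∀ n, 0 ≤ W2 (νs n) ν := fun n => Real.sqrt_nonneg _
  obtain ⟨b, hb⟩ := hνconv.bddAbove_range
  replace hb : ∀ n, W2 (νs n) ν ≤ b := fun n => hb ⟨n, rfl⟩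
  let P : ℕ → ProbabilityMeasure (Rd d) := fun n => ⟨μs n, hμprob n⟩
  have hmom : ∀ n, ∫ x, ‖x‖ ^ 2 ∂(μs n) ≤ 2 * ∫ x, ‖x‖ ^ 2 ∂ν + 2 * (b + 1) ^ 2 := fun n => by
    have hb0 : 0 ≤ b := (hW0 n).trans (hb n)
    simpa only [excess_zero] using hexc n 0 le_rfl (b + 1) (by linarith) (by linarith [hb n])
  obtain ⟨μ, φ, hφ, hlim⟩ := exists_weak_limit P _ hμmom hmom
  have hcoe : ∀ n, (((P ∘ φ) n : ProbabilityMeasure (Rd d)) : Measure (Rd d)) = μs (φ n) :=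
    fun n => rfl
  have hPmom : ∀ n, FiniteSecondMoment
      (((P ∘ φ) n : ProbabilityMeasure (Rd d)) : Measure (Rd d)) := fun n => by
    rw [hcoe]; exact hμmom (φ n)
  have hμ2 : FiniteSecondMoment (μ : Measure (Rd d)) := by
    have := (integral_excess_le_of_weak hlim hPmom le_rfl
      (K := 2 * ∫ x, ‖x‖ ^ 2 ∂ν + 2 * (b + 1) ^ 2)
      (by have : 0 ≤ ∫ x, ‖x‖ ^ 2 ∂ν := integral_nonneg fun x => by positivity
          positivity)
      (Eventually.of_forall fun n => by
        simpa only [excess_zero, hcoe] using hmom (φ n))).1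
    rw [show excess (0 : ℝ) = fun x : Rd d => ‖x‖ ^ 2 from funext excess_zero] at this
    exact this
  have hW : Tendsto (fun k => W2 (μs (φ k)) (μ : Measure (Rd d))) atTop (𝓝 0) := by
    simp only [← hcoe]
    refine tendsto_W2_of_weak hlim hPmom hμ2 fun η hη => ?_
    simp only [hcoe]
    obtain ⟨R, hR⟩ := ((tendsto_integral_excess hν2).eventually
      (gt_mem_nhds (by positivity : 0 < η / 4))).exists
    refine ⟨R, R.cast_nonneg, ?_⟩
    have hs : 0 < Real.sqrt (η / 4) := Real.sqrt_pos.2 (by positivity)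
    filter_upwards [(hνconv.comp hφ.tendsto_atTop).eventually (gt_mem_nhds hs)] with n hn
    have h1 := hexc (φ n) R R.cast_nonneg _ hs hn
    rw [Real.sq_sqrt (by positivity)] at h1
    exact h1.trans (by linarith)
  refine ⟨μ, φ, hφ, inferInstance, hμ2, ?_, hW⟩
  refine convexOrder_of_lipschitz hμ2 hν2 fun f L hf hL => ?_
  refine le_of_tendsto_of_tendsto'
    (tendsto_integral_of_tendsto_W2 (fun n => hμmom (φ n)) hμ2 hW hL)
    (tendsto_integral_of_tendsto_W2 (fun n => hνmom (φ n)) hν2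
      (hνconv.comp hφ.tendsto_atTop) hL) fun n => ?_
  exact hord (φ n) f hf (integrable_of_lipschitz (hμmom _) hL) (integrable_of_lipschitz (hνmom _) hL)
end
end

section
/- Let ν ∈ P_2(ℝ^d) and let D ⊂ P_2(ℝ^d) be closed in the W_2 metric such that D ∩ M_ν is non-empty, where M_ν = {μ ∈ P_2(ℝ^d) : μ ≤_c ν}. Then the variance maximization problem max{ Var(μ) : μ ∈ D, μ ≤_c ν } attains a solution. -/
/-!
Measures in convex order share their barycenter (`ConvexOrder.integral_id_eq`), so by `Var_eq`
maximizing the variance over `D ∩ M_ν` means maximizing the second moment, which is bounded there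
by that of `ν`. The point is that `M_ν` is `W₂`-compact.

For each `s` the function `(‖x‖² - s)⁺` is convex, so every `μ ≤_c ν` has excess second moment
`∫ (‖x‖² - s)⁺ dμ` at most that of `ν` (`ConvexOrder.tailMass_le`), and the latter tends to `0` as
`s → ∞`. Hence a maximizing sequence is tight with uniformly integrable second moments, and
the theorem of Prokhorov gives a weakly convergent subsequence (`exists_weak_subseq`).

* The subsequence converges in `W₂` (`tendsto_W2`). A partial transport plan matches the common
  mass inside small cells with null boundary; the remaining mass is small and is coupled
  independently, at a cost controlled by the excess second moments
  (`eventually_exists_coupling`). So the limit lies in `D`.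
* Integrals of continuous functions of quadratic growth converge
  (`tendsto_integral_of_quadratic_bound`), so the limit attains the supremum of the second moments.
* The limit is below `ν` in convex order, since a convex function is an increasing limit of finite
  maxima of affine functions (`convexOrder_of_tendsto`).
-/

open MeasureTheory Filter
open scoped RealInnerProductSpace Topology

noncomputable section

/-! ### Couplings and convergence in `W₂` -/

/-- The excess second moment `∫ (‖x‖² - s)⁺ dμ`, as an extended nonnegative real. -/
def tailMass {d : ℕ} (μ : Measure (Rd d)) (s : ℝ) : ENNReal :=
  ∫⁻ x, ENNReal.ofReal (‖x‖ ^ 2 - s) ∂μ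

/-- The quadratic transport cost of a plan `π`, as an extended nonnegative real. -/
def cost {d : ℕ} (π : Measure (Rd d × Rd d)) : ENNReal :=
  ∫⁻ p, ENNReal.ofReal (‖p.1 - p.2‖ ^ 2) ∂π

/-- A measure `ρ ≤ μ` of small mass carries little second moment, up to the excess of `μ`. -/
lemma lintegral_sq_le_of_le {d : ℕ} {ρ μ : Measure (Rd d)} (h : ρ ≤ μ) (s : ℝ) :
    ∫⁻ x, ENNReal.ofReal (‖x‖ ^ 2) ∂ρ ≤ ENNReal.ofReal s * ρ Set.univ + tailMass μ s := by
  calc ∫⁻ x, ENNReal.ofReal (‖x‖ ^ 2) ∂ρ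
      ≤ ∫⁻ x, (ENNReal.ofReal s + ENNReal.ofReal (‖x‖ ^ 2 - s)) ∂ρ := by
        refine lintegral_mono fun x => ?_
        calc ENNReal.ofReal (‖x‖ ^ 2) = ENNReal.ofReal (s + (‖x‖ ^ 2 - s)) := by ring_nf
          _ ≤ _ := ENNReal.ofReal_add_le
    _ = ENNReal.ofReal s * ρ Set.univ + ∫⁻ x, ENNReal.ofReal (‖x‖ ^ 2 - s) ∂ρ := by
        rw [lintegral_add_left measurable_const, lintegral_const]
    _ ≤ _ := by
        gcongr
        exact lintegral_mono' h le_rfl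

/-- The cost of a product plan is controlled by the second moments of its factors. -/
lemma cost_prod_le {d : ℕ} (ρ σ : Measure (Rd d)) [IsFiniteMeasure ρ] [IsFiniteMeasure σ] :
    cost (ρ.prod σ) ≤ 2 * (σ Set.univ * ∫⁻ x, ENNReal.ofReal (‖x‖ ^ 2) ∂ρ) +
      2 * (ρ Set.univ * ∫⁻ x, ENNReal.ofReal (‖x‖ ^ 2) ∂σ) := by
  have hm : Measurable fun x : Rd d => ENNReal.ofReal (‖x‖ ^ 2) := by fun_prop
  calc cost (ρ.prod σ)
      ≤ ∫⁻ p, (2 * ENNReal.ofReal (‖p.1‖ ^ 2) + 2 * ENNReal.ofReal (‖p.2‖ ^ 2)) ∂(ρ.prod σ) := by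
        refine lintegral_mono fun p => ?_
        have h2 : (2 : ENNReal) = ENNReal.ofReal 2 := by simp
        have hmul : ∀ a : ℝ, 2 * ENNReal.ofReal a = ENNReal.ofReal (2 * a) := fun a => by
          rw [ENNReal.ofReal_mul (by norm_num), ← h2]
        rw [hmul, hmul, ← ENNReal.ofReal_add (by positivity) (by positivity)]
        refine ENNReal.ofReal_le_ofReal ?_
        have := norm_sub_le p.1 p.2
        nlinarith [sq_nonneg (‖p.1‖ - ‖p.2‖), norm_nonneg (p.1 - p.2), norm_nonneg p.1,
          norm_nonneg p.2]
    _ = _ := by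
        rw [lintegral_add_left (by fun_prop), lintegral_const_mul _ (by fun_prop),
          lintegral_const_mul _ (by fun_prop)]
        congr 2
        · rw [← lintegral_map hm measurable_fst, Measure.map_fst_prod, lintegral_smul_measure,
            smul_eq_mul]
        · rw [← lintegral_map hm measurable_snd, Measure.map_snd_prod, lintegral_smul_measure,
            smul_eq_mul]

/-- A partial plan is completed to a coupling by adding the normalized product of the parts of
the two marginals that it leaves out. -/
lemma exists_coupling_of_partial {d : ℕ} (μ ν : Measure (Rd d)) [IsProbabilityMeasure μ]
    [IsProbabilityMeasure ν] (γ : Measure (Rd d × Rd d)) (h1 : γ.map Prod.fst ≤ μ)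
    (h2 : γ.map Prod.snd ≤ ν) (s : ℝ) :
    ∃ π, IsCoupling π μ ν ∧ cost π ≤ cost γ +
      (2 * (ENNReal.ofReal s * (1 - γ Set.univ) + tailMass μ s) +
       2 * (ENNReal.ofReal s * (1 - γ Set.univ) + tailMass ν s)) := by
  have hf1 : IsFiniteMeasure (γ.map Prod.fst) := isFiniteMeasure_of_le μ h1
  have hf2 : IsFiniteMeasure (γ.map Prod.snd) := isFiniteMeasure_of_le ν h2
  have hu1 : (γ.map Prod.fst) Set.univ = γ Set.univ := by
    rw [Measure.map_apply measurable_fst MeasurableSet.univ, Set.preimage_univ]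
  have hu2 : (γ.map Prod.snd) Set.univ = γ Set.univ := by
    rw [Measure.map_apply measurable_snd MeasurableSet.univ, Set.preimage_univ]
  set ρ := μ - γ.map Prod.fst with hρ
  set σ := ν - γ.map Prod.snd with hσ
  have hρle : ρ ≤ μ := Measure.sub_le
  have hσle : σ ≤ ν := Measure.sub_le
  have : IsFiniteMeasure ρ := isFiniteMeasure_of_le μ hρle
  have : IsFiniteMeasure σ := isFiniteMeasure_of_le ν hσle
  set m := 1 - γ Set.univ with hm
  have hρm : ρ Set.univ = m := by
    rw [hρ, Measure.sub_apply MeasurableSet.univ h1, hu1, measure_univ]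
  have hσm : σ Set.univ = m := by
    rw [hσ, Measure.sub_apply MeasurableSet.univ h2, hu2, measure_univ]
  have hmtop : m ≠ ⊤ := by rw [← hρm]; exact measure_ne_top _ _
  have key : ∀ τ : Measure (Rd d), τ Set.univ = m → m⁻¹ • m • τ = τ := by
    intro τ hτ
    rcases eq_or_ne m 0 with h0 | h0
    · have : τ = 0 := Measure.measure_univ_eq_zero.1 (hτ.trans h0)
      simp [this]
    · rw [smul_smul, ENNReal.inv_mul_cancel h0 hmtop, one_smul]
  refine ⟨γ + m⁻¹ • ρ.prod σ, ⟨?_, ?_⟩, ?_⟩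
  · rw [Measure.map_add _ _ measurable_fst, Measure.map_smul, Measure.map_fst_prod, hσm,
      key ρ hρm, add_comm]
    exact Measure.sub_add_cancel_of_le h1
  · rw [Measure.map_add _ _ measurable_snd, Measure.map_smul, Measure.map_snd_prod, hρm,
      key σ hσm, add_comm]
    exact Measure.sub_add_cancel_of_le h2
  · have h3 : cost (γ + m⁻¹ • ρ.prod σ) = cost γ + m⁻¹ * cost (ρ.prod σ) := by
      simp [cost, lintegral_add_measure, lintegral_smul_measure]
    rw [h3]
    gcongr
    have hinv : m⁻¹ * m ≤ 1 := ENNReal.inv_mul_le_one m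
    have hA := lintegral_sq_le_of_le hρle s
    have hB := lintegral_sq_le_of_le hσle s
    rw [hρm] at hA
    rw [hσm] at hB
    have hC := cost_prod_le ρ σ
    rw [hρm, hσm] at hC
    calc m⁻¹ * cost (ρ.prod σ)
        ≤ m⁻¹ * (2 * (m * ∫⁻ x, ENNReal.ofReal (‖x‖ ^ 2) ∂ρ) +
            2 * (m * ∫⁻ x, ENNReal.ofReal (‖x‖ ^ 2) ∂σ)) := by gcongr
      _ = (m⁻¹ * m) * (2 * (∫⁻ x, ENNReal.ofReal (‖x‖ ^ 2) ∂ρ) +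
            2 * (∫⁻ x, ENNReal.ofReal (‖x‖ ^ 2) ∂σ)) := by ring
      _ ≤ 1 * (2 * (ENNReal.ofReal s * m + tailMass μ s) +
            2 * (ENNReal.ofReal s * m + tailMass ν s)) := by gcongr
      _ = _ := one_mul _

lemma inv_smul_smul_le {α : Type*} [MeasurableSpace α] (τ : Measure α) {a b : ENNReal}
    (h : b ≤ a) : a⁻¹ • b • τ ≤ τ := by
  rw [smul_smul]
  refine Measure.le_iff.2 fun t _ => ?_
  rw [Measure.smul_apply, smul_eq_mul]
  calc a⁻¹ * b * τ t ≤ 1 * τ t := by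
        gcongr
        exact (mul_le_mul_right h _).trans (ENNReal.inv_mul_le_one a)
    _ = τ t := one_mul _

lemma sum_restrict_le {α : Type*} [MeasurableSpace α] (μ : Measure α) {A : ℕ → Set α}
    (hA : ∀ i, MeasurableSet (A i)) (hd : Pairwise (Function.onFun Disjoint A)) (K : ℕ) :
    ∑ i ∈ Finset.range K, μ.restrict (A i) ≤ μ := by
  refine Measure.le_iff.2 fun t ht => ?_
  simp only [Measure.finsetSum_apply, Measure.restrict_apply ht]
  rw [← measure_biUnion_finset]
  · exact measure_mono (by simp)
  · intro i _ j _ hij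
    exact (hd hij).mono Set.inter_subset_right Set.inter_subset_right
  · exact fun i _ => ht.inter (hA i)

/-- Given disjoint cells of diameter at most `ε`, matching inside each cell as much mass of `μ`
and `ν` as possible gives a partial plan of mass `∑ min (μ Aᵢ) (ν Aᵢ)` and cost at most `ε²`. -/
lemma exists_cell_plan {d : ℕ} (μ ν : Measure (Rd d)) [IsProbabilityMeasure μ]
    [IsProbabilityMeasure ν] {A : ℕ → Set (Rd d)} (hA : ∀ i, MeasurableSet (A i))
    (hd : Pairwise (Function.onFun Disjoint A)) {ε : ℝ}
    (hdiam : ∀ i, ∀ x ∈ A i, ∀ y ∈ A i, ‖x - y‖ ≤ ε) (K : ℕ) :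
    ∃ γ : Measure (Rd d × Rd d), γ.map Prod.fst ≤ μ ∧ γ.map Prod.snd ≤ ν ∧
      γ Set.univ = ∑ i ∈ Finset.range K, min (μ (A i)) (ν (A i)) ∧
      cost γ ≤ ENNReal.ofReal (ε ^ 2) := by
  set γ : Measure (Rd d × Rd d) := ∑ i ∈ Finset.range K,
    (max (μ (A i)) (ν (A i)))⁻¹ • (μ.restrict (A i)).prod (ν.restrict (A i)) with hγ
  have h1 : γ.map Prod.fst ≤ μ := by
    rw [hγ, Measure.map_finset_sum measurable_fst.aemeasurable]
    refine le_trans (Finset.sum_le_sum fun i _ => ?_) (sum_restrict_le μ hA hd K)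
    rw [Measure.map_smul, Measure.map_fst_prod]
    exact inv_smul_smul_le _ (by simp)
  have h2 : γ.map Prod.snd ≤ ν := by
    rw [hγ, Measure.map_finset_sum measurable_snd.aemeasurable]
    refine le_trans (Finset.sum_le_sum fun i _ => ?_) (sum_restrict_le ν hA hd K)
    rw [Measure.map_smul, Measure.map_snd_prod]
    exact inv_smul_smul_le _ (by simp)
  refine ⟨γ, h1, h2, ?_, ?_⟩
  · rw [hγ, Measure.finsetSum_apply]
    refine Finset.sum_congr rfl fun i _ => ?_
    rw [Measure.smul_apply, smul_eq_mul, ← Set.univ_prod_univ, Measure.prod_prod,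
      Measure.restrict_apply_univ, Measure.restrict_apply_univ, ← max_mul_min (μ (A i)),
      ← mul_assoc]
    rcases eq_or_ne (max (μ (A i)) (ν (A i))) 0 with h0 | h0
    · have : min (μ (A i)) (ν (A i)) = 0 := le_antisymm (min_le_max.trans h0.le) bot_le
      simp [this]
    · rw [ENNReal.inv_mul_cancel h0 (by simp), one_mul]
  · have hmass : γ Set.univ ≤ 1 := by
      calc γ Set.univ = (γ.map Prod.fst) Set.univ := by
            rw [Measure.map_apply measurable_fst MeasurableSet.univ, Set.preimage_univ]
        _ ≤ μ Set.univ := h1 _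
        _ = 1 := measure_univ
    have hae : ∀ᵐ p ∂γ, ENNReal.ofReal (‖p.1 - p.2‖ ^ 2) ≤ ENNReal.ofReal (ε ^ 2) := by
      rw [hγ, ← Measure.sum_coe_finset, Measure.ae_sum_iff]
      intro i
      refine Measure.ae_smul_measure ?_ _
      rw [Measure.prod_restrict]
      filter_upwards [ae_restrict_mem ((hA i).prod (hA i))] with p hp
      have := hdiam i p.1 hp.1 p.2 hp.2
      gcongr
    calc cost γ ≤ ∫⁻ _, ENNReal.ofReal (ε ^ 2) ∂γ := lintegral_mono_ae hae
      _ = ENNReal.ofReal (ε ^ 2) * γ Set.univ := lintegral_const _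
      _ ≤ ENNReal.ofReal (ε ^ 2) * 1 := by gcongr
      _ = _ := mul_one _

/-- Euclidean space splits into countably many small cells whose boundaries are `μ`-null: the
disjointification of balls of suitable radii around a dense sequence. -/
lemma exists_null_frontier_partition {d : ℕ} (μ : Measure (Rd d)) [IsProbabilityMeasure μ]
    {ε : ℝ} (hε : 0 < ε) :
    ∃ A : ℕ → Set (Rd d), (∀ i, MeasurableSet (A i)) ∧ Pairwise (Function.onFun Disjoint A) ∧
      (∀ i, ∀ x ∈ A i, ∀ y ∈ A i, ‖x - y‖ ≤ ε) ∧ (∀ i, μ (frontier (A i)) = 0) ∧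
      Tendsto (fun K => ∑ i ∈ Finset.range K, μ (A i)) atTop (𝓝 1) := by
  obtain ⟨z, hz⟩ := TopologicalSpace.exists_dense_seq (Rd d)
  have hr : ∀ i, ∃ r ∈ Set.Ioo (ε / 4) (ε / 2), μ (frontier (Metric.ball (z i) r)) = 0 := by
    intro i
    obtain ⟨r, hr, h⟩ := exists_null_frontier_thickening μ {z i}
      (show ε / 4 < ε / 2 by linarith)
    exact ⟨r, hr, by rwa [Metric.thickening_singleton] at h⟩
  choose r hr hfr using hr
  set B : ℕ → Set (Rd d) := fun i => Metric.ball (z i) (r i) with hB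
  have hcover : ⋃ i, B i = Set.univ := by
    refine Set.eq_univ_of_forall fun x => ?_
    obtain ⟨i, hi⟩ := hz.exists_dist_lt x (show 0 < ε / 4 by linarith)
    exact Set.mem_iUnion.2 ⟨i, Metric.mem_ball.2 (hi.trans (hr i).1)⟩
  have hdisj : Pairwise (Function.onFun Disjoint (disjointed B)) := disjoint_disjointed B
  have hmeas : ∀ i, MeasurableSet (disjointed B i) :=
    fun i => MeasurableSet.disjointed (fun j => measurableSet_ball) i
  refine ⟨disjointed B, hmeas, hdisj, ?_, ?_, ?_⟩
  · intro i x hx y hy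
    have hx' := Metric.mem_ball.1 (disjointed_subset B i hx)
    have hy' := Metric.mem_ball.1 (disjointed_subset B i hy)
    rw [← dist_eq_norm]
    have := dist_triangle_right x y (z i)
    have := (hr i).2
    linarith
  · intro i
    refine disjointedRec (p := fun t => μ (frontier t) = 0) (fun t j ht => ?_) (hfr i)
    refine measure_mono_null ?_ (measure_union_null ht (hfr j))
    rw [Set.sdiff_eq]
    refine (frontier_inter_subset _ _).trans (Set.union_subset_union Set.inter_subset_left ?_)
    rw [frontier_compl]
    exact Set.inter_subset_right
  · have h := measure_iUnion (μ := μ) hdisj hmeas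
    rw [iUnion_disjointed, hcover, measure_univ] at h
    rw [h]
    exact ENNReal.summable.hasSum.tendsto_sum_nat

/-- Weak convergence with uniformly vanishing excess second moments yields couplings of
arbitrarily small cost. -/
lemma eventually_exists_coupling {d : ℕ} {μs : ℕ → ProbabilityMeasure (Rd d)}
    {μ : ProbabilityMeasure (Rd d)} (hw : Tendsto μs atTop (𝓝 μ)) {t : ℝ → ENNReal}
    (ht : Tendsto t atTop (𝓝 0)) (hs : ∀ n s, tailMass (μs n : Measure (Rd d)) s ≤ t s)
    (hμ : ∀ s, tailMass (μ : Measure (Rd d)) s ≤ t s) {η : ENNReal} (hη : 0 < η) :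
    ∀ᶠ n in atTop, ∃ π, IsCoupling π (μs n : Measure (Rd d)) μ ∧ cost π ≤ η := by
  -- three error terms: cell diameter, excess moment above level `s`, mass left unmatched
  have hη3 : 0 < η / 3 := ENNReal.div_pos hη.ne' (by simp)
  obtain ⟨ε, hε, hεη⟩ : ∃ ε : ℝ, 0 < ε ∧ ENNReal.ofReal (ε ^ 2) < η / 3 := by
    have h : Tendsto (fun ε : ℝ => ENNReal.ofReal (ε ^ 2)) (𝓝[>] 0) (𝓝 0) := by
      have : Continuous fun ε : ℝ => ENNReal.ofReal (ε ^ 2) :=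
        ENNReal.continuous_ofReal.comp (continuous_pow 2)
      simpa using (this.tendsto 0).mono_left nhdsWithin_le_nhds
    obtain ⟨ε, h1, h2⟩ := ((h.eventually_lt_const hη3).and self_mem_nhdsWithin).exists
    exact ⟨ε, h2, h1⟩
  obtain ⟨s, hsη⟩ : ∃ s : ℝ, 4 * t s < η / 3 := by
    have h : Tendsto (fun s => 4 * t s) atTop (𝓝 0) := by
      simpa using ENNReal.Tendsto.const_mul ht (Or.inr (by simp : (4 : ENNReal) ≠ ⊤))
    exact (h.eventually_lt_const hη3).exists
  obtain ⟨A, hA, hd, hdiam, hfr, hsum⟩ :=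
    exists_null_frontier_partition (μ : Measure (Rd d)) hε
  have hcont : ∀ u : ENNReal, Tendsto (fun v : ENNReal => 4 * (ENNReal.ofReal s * (1 - v)))
      (𝓝 u) (𝓝 (4 * (ENNReal.ofReal s * (1 - u)))) := by
    intro u
    refine ENNReal.Tendsto.const_mul (ENNReal.Tendsto.const_mul ?_ (Or.inr (by simp)))
      (Or.inr (by simp))
    exact ENNReal.Tendsto.sub tendsto_const_nhds tendsto_id (Or.inl (by simp))
  obtain ⟨K, hK⟩ : ∃ K, 4 * (ENNReal.ofReal s *
      (1 - ∑ i ∈ Finset.range K, (μ : Measure (Rd d)) (A i))) < η / 3 := by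
    have h := (hcont 1).comp hsum
    simp only [tsub_self, mul_zero] at h
    exact (h.eventually_lt_const hη3).exists
  have hmin : Tendsto (fun n => ∑ i ∈ Finset.range K,
      min ((μs n : Measure (Rd d)) (A i)) ((μ : Measure (Rd d)) (A i))) atTop
      (𝓝 (∑ i ∈ Finset.range K, (μ : Measure (Rd d)) (A i))) := by
    refine tendsto_finsetSum _ fun i _ => ?_
    have h := ProbabilityMeasure.tendsto_measure_of_null_frontier_of_tendsto' hw (hfr i)
    simpa using h.min (tendsto_const_nhds (x := (μ : Measure (Rd d)) (A i)))
  filter_upwards [((hcont _).comp hmin).eventually_lt_const hK] with n hn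
  obtain ⟨γ, h1, h2, h3, h4⟩ :=
    exists_cell_plan (μs n : Measure (Rd d)) (μ : Measure (Rd d)) hA hd hdiam K
  obtain ⟨π, hπ, hc⟩ := exists_coupling_of_partial _ _ γ h1 h2 s
  refine ⟨π, hπ, hc.trans ?_⟩
  simp only [Function.comp] at hn
  rw [← h3] at hn
  calc _ ≤ ENNReal.ofReal (ε ^ 2) + (2 * (ENNReal.ofReal s * (1 - γ Set.univ) + t s) +
          2 * (ENNReal.ofReal s * (1 - γ Set.univ) + t s)) := by
        gcongr
        · exact hs n s
        · exact hμ s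
    _ = ENNReal.ofReal (ε ^ 2) + 4 * (ENNReal.ofReal s * (1 - γ Set.univ)) + 4 * t s := by ring
    _ ≤ η / 3 + η / 3 + η / 3 := by gcongr
    _ = η := ENNReal.add_thirds η

/-- Weak convergence with uniformly vanishing excess second moments implies `W₂` convergence. -/
lemma tendsto_W2 {d : ℕ} {μs : ℕ → ProbabilityMeasure (Rd d)}
    {μ : ProbabilityMeasure (Rd d)} (hw : Tendsto μs atTop (𝓝 μ)) {t : ℝ → ENNReal}
    (ht : Tendsto t atTop (𝓝 0)) (hs : ∀ n s, tailMass (μs n : Measure (Rd d)) s ≤ t s)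
    (hμ : ∀ s, tailMass (μ : Measure (Rd d)) s ≤ t s) :
    Tendsto (fun n => W2 (μs n : Measure (Rd d)) μ) atTop (𝓝 0) := by
  have hnn : ∀ π : Measure (Rd d × Rd d), 0 ≤ ∫ p, ‖p.1 - p.2‖ ^ 2 ∂π :=
    fun π => integral_nonneg fun p => by positivity
  have hsq : Tendsto (fun n => W2sq (μs n : Measure (Rd d)) μ) atTop (𝓝 0) := by
    refine tendsto_order.2 ⟨fun a ha => Eventually.of_forall fun n => ha.trans_le ?_,
      fun a ha => ?_⟩
    · refine Real.sInf_nonneg ?_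
      rintro _ ⟨π, -, rfl⟩
      exact hnn π
    · filter_upwards [eventually_exists_coupling hw ht hs hμ
        (ENNReal.ofReal_pos.2 (half_pos ha))] with n hn
      obtain ⟨π, hπ, hc⟩ := hn
      have hle : W2sq (μs n : Measure (Rd d)) μ ≤ ∫ p, ‖p.1 - p.2‖ ^ 2 ∂π := by
        refine csInf_le ⟨0, ?_⟩ ⟨π, hπ, rfl⟩
        rintro _ ⟨τ, -, rfl⟩
        exact hnn τ
      refine hle.trans_lt (lt_of_le_of_lt ?_ (half_lt_self ha))
      rw [integral_eq_lintegral_of_nonneg_ae (Eventually.of_forall fun p => by positivity)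
        (by fun_prop)]
      exact ENNReal.toReal_le_of_le_ofReal (half_pos ha).le hc
  have := (Real.continuous_sqrt.tendsto 0).comp hsq
  simpa [W2, Function.comp_def] using this

/-! ### Excess second moments -/

lemma measurable_excess {d : ℕ} (s : ℝ) :
    Measurable fun x : Rd d => ENNReal.ofReal (‖x‖ ^ 2 - s) := by fun_prop

lemma tailMass_zero_lt_top {d : ℕ} {μ : Measure (Rd d)} (h : FiniteSecondMoment μ) :
    tailMass μ 0 < ⊤ := by
  have h' : Integrable (fun x : Rd d => ‖x‖ ^ 2) μ := h
  simpa [tailMass] using h'.lintegral_lt_top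

lemma finiteSecondMoment_of_tailMass {d : ℕ} {μ : Measure (Rd d)} (h : tailMass μ 0 < ⊤) :
    FiniteSecondMoment μ := by
  refine ⟨by fun_prop, ?_⟩
  rw [hasFiniteIntegral_iff_ofReal (Eventually.of_forall fun x => by positivity)]
  simpa [tailMass] using h

lemma tendsto_tailMass {d : ℕ} {ν : Measure (Rd d)} (hν : FiniteSecondMoment ν) :
    Tendsto (tailMass ν) atTop (𝓝 0) := by
  have h := tendsto_lintegral_filter_of_dominated_convergence (μ := ν) (l := atTop)
    (F := fun (s : ℝ) (x : Rd d) => ENNReal.ofReal (‖x‖ ^ 2 - s)) (f := fun _ => 0)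
    (fun x => ENNReal.ofReal (‖x‖ ^ 2 - 0)) (Eventually.of_forall measurable_excess)
    (by
      filter_upwards [eventually_ge_atTop (0 : ℝ)] with s hs
      exact Eventually.of_forall fun x => ENNReal.ofReal_le_ofReal (by linarith))
    (tailMass_zero_lt_top hν).ne
    (Eventually.of_forall fun x => by
      refine tendsto_const_nhds.congr' ?_
      filter_upwards [eventually_ge_atTop (‖x‖ ^ 2)] with s hs
      exact (ENNReal.ofReal_of_nonpos (by linarith)).symm)
  rw [lintegral_zero] at h
  exact h

/-- The excess second moment is monotone for the convex order, because `(‖x‖² - s)⁺` is convex. -/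
lemma ConvexOrder.tailMass_le {d : ℕ} {μ ν : Measure (Rd d)} [IsProbabilityMeasure μ]
    [IsProbabilityMeasure ν] (h : ConvexOrder μ ν) (hμ : FiniteSecondMoment μ)
    (hν : FiniteSecondMoment ν) (s : ℝ) : tailMass μ s ≤ tailMass ν s := by
  have hconv : ConvexOn ℝ Set.univ fun x : Rd d => max (‖x‖ ^ 2 - s) 0 := by
    have h1 : ConvexOn ℝ Set.univ fun x : Rd d => ‖x‖ ^ 2 :=
      convexOn_univ_norm.pow (fun x _ => norm_nonneg x) 2
    have h2 : ConvexOn ℝ Set.univ fun x : Rd d => ‖x‖ ^ 2 - s := by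
      simp only [sub_eq_add_neg]
      exact h1.add_const (-s)
    exact h2.sup (convexOn_const 0 convex_univ)
  have hint : ∀ τ : Measure (Rd d), IsProbabilityMeasure τ → FiniteSecondMoment τ →
      Integrable (fun x : Rd d => max (‖x‖ ^ 2 - s) 0) τ := by
    intro τ _ hτ
    have hτ' : Integrable (fun x : Rd d => ‖x‖ ^ 2) τ := hτ
    exact (hτ'.sub (integrable_const s)).pos_part
  have key := ENNReal.ofReal_le_ofReal (h _ hconv (hint μ ‹_› hμ) (hint ν ‹_› hν))
  rw [ofReal_integral_eq_lintegral_ofReal (hint μ ‹_› hμ)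
      (Eventually.of_forall fun x => le_max_right _ _),
    ofReal_integral_eq_lintegral_ofReal (hint ν ‹_› hν)
      (Eventually.of_forall fun x => le_max_right _ _)] at key
  simpa [tailMass, ENNReal.ofReal_max] using key

/-- Excess second moments are lower semicontinuous under weak convergence. -/
lemma tailMass_le_of_tendsto {d : ℕ} {μs : ℕ → ProbabilityMeasure (Rd d)}
    {μ : ProbabilityMeasure (Rd d)} (hw : Tendsto μs atTop (𝓝 μ)) {s : ℝ} {c : ENNReal}
    (hs : ∀ n, tailMass (μs n : Measure (Rd d)) s ≤ c) :
    tailMass (μ : Measure (Rd d)) s ≤ c := by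
  have h := lintegral_le_liminf_lintegral_of_forall_isOpen_measure_le_liminf_measure
    (μ := (μ : Measure (Rd d))) (μs := fun n => (μs n : Measure (Rd d)))
    (f := fun x => max (‖x‖ ^ 2 - s) 0) (by fun_prop) (fun x => le_max_right _ _)
    (fun G hG => ProbabilityMeasure.le_liminf_measure_open_of_tendsto hw hG)
  simp only [ENNReal.ofReal_max, ENNReal.ofReal_zero, max_zero] at h
  refine h.trans ?_
  calc _ ≤ liminf (fun _ : ℕ => c) atTop :=
        liminf_le_liminf (Eventually.of_forall fun n => by simpa [tailMass] using hs n)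
    _ = c := liminf_const c

/-! ### Passing to the weak limit -/

lemma integrable_of_quadratic_bound {d : ℕ} {μ : Measure (Rd d)} [IsProbabilityMeasure μ]
    (hμ : FiniteSecondMoment μ) {h : Rd d → ℝ} (hc : Continuous h) {C : ℝ}
    (hb : ∀ x, |h x| ≤ C * (1 + ‖x‖ ^ 2)) : Integrable h μ := by
  have hμ' : Integrable (fun x : Rd d => ‖x‖ ^ 2) μ := hμ
  exact (((integrable_const 1).add hμ').const_mul C).mono' hc.aestronglyMeasurable
    (Eventually.of_forall fun x => hb x)

/-- Clamping a function of quadratic growth at height `C (1 + s)` changes its integral by at most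
`C` times the excess second moment at level `s`. -/
lemma abs_integral_sub_clamp_le {d : ℕ} {μ : Measure (Rd d)} [IsProbabilityMeasure μ]
    (hμ : FiniteSecondMoment μ) {h : Rd d → ℝ} (hc : Continuous h) {C : ℝ} (hC : 0 ≤ C)
    (hb : ∀ x, |h x| ≤ C * (1 + ‖x‖ ^ 2)) {s a : ℝ} (hs : 0 ≤ s) (ha : 0 ≤ a)
    (hta : ENNReal.ofReal C * tailMass μ s ≤ ENNReal.ofReal a) :
    |∫ x, h x ∂μ - ∫ x, max (-(C * (1 + s))) (min (C * (1 + s)) (h x)) ∂μ| ≤ a := by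
  set M := C * (1 + s) with hM
  have hM0 : 0 ≤ M := by positivity
  have hci : Integrable (fun x => max (-M) (min M (h x))) μ := by
    refine integrable_of_quadratic_bound hμ (by fun_prop) (C := C) fun x => le_trans ?_ (hb x)
    rcases abs_cases (h x) with h1 | h1 <;> rw [abs_le] <;> constructor <;> grind
  rw [← integral_sub (integrable_of_quadratic_bound hμ hc hb) hci]
  refine (abs_integral_le_integral_abs).trans ?_
  rw [integral_eq_lintegral_of_nonneg_ae (Eventually.of_forall fun x => abs_nonneg _)
    (by fun_prop)]
  refine ENNReal.toReal_le_of_le_ofReal ha (le_trans ?_ hta)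
  rw [tailMass, ← lintegral_const_mul _ (measurable_excess s)]
  refine lintegral_mono fun x => ?_
  rw [← ENNReal.ofReal_mul hC]
  have hbx := abs_le.1 (hb x)
  have hCx : C * (‖x‖ ^ 2 - s) = C * (1 + ‖x‖ ^ 2) - M := by rw [hM]; ring
  rcases le_or_gt (|h x|) M with hle | hgt
  · have h1 := abs_le.1 hle
    rw [min_eq_right h1.2, max_eq_right h1.1]
    simp
  · refine ENNReal.ofReal_le_ofReal ?_
    rw [hCx]
    rcases lt_abs.1 hgt with h1 | h1
    · rw [min_eq_left h1.le, max_eq_right (by linarith), abs_of_nonneg (by linarith)]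
      linarith [hbx.2]
    · rw [min_eq_right (by linarith), max_eq_left (by linarith), abs_of_nonpos (by linarith)]
      linarith [hbx.1]

/-- Under uniformly vanishing excess second moments, weak convergence extends from bounded test
functions to continuous ones of quadratic growth. -/
lemma tendsto_integral_of_quadratic_bound {d : ℕ} {μs : ℕ → ProbabilityMeasure (Rd d)}
    {μ : ProbabilityMeasure (Rd d)} (hw : Tendsto μs atTop (𝓝 μ)) {t : ℝ → ENNReal}
    (ht : Tendsto t atTop (𝓝 0)) (hs : ∀ n s, tailMass (μs n : Measure (Rd d)) s ≤ t s)
    (hμ : ∀ s, tailMass (μ : Measure (Rd d)) s ≤ t s)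
    (hs2 : ∀ n, FiniteSecondMoment (μs n : Measure (Rd d)))
    (hμ2 : FiniteSecondMoment (μ : Measure (Rd d)))
    {h : Rd d → ℝ} (hc : Continuous h) {C : ℝ} (hC : 0 ≤ C)
    (hb : ∀ x, |h x| ≤ C * (1 + ‖x‖ ^ 2)) :
    Tendsto (fun n => ∫ x, h x ∂(μs n : Measure (Rd d))) atTop
      (𝓝 (∫ x, h x ∂(μ : Measure (Rd d)))) := by
  rw [Metric.tendsto_atTop']
  intro ε hε
  have hε3 : 0 < ε / 3 := by linarith
  obtain ⟨s, hst, hs0⟩ : ∃ s : ℝ, ENNReal.ofReal C * t s < ENNReal.ofReal (ε / 3) ∧ 0 ≤ s := by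
    have h1 : Tendsto (fun s => ENNReal.ofReal C * t s) atTop (𝓝 0) := by
      simpa using ENNReal.Tendsto.const_mul ht
        (Or.inr (ENNReal.ofReal_ne_top : ENNReal.ofReal C ≠ ⊤))
    exact ((h1.eventually_lt_const (ENNReal.ofReal_pos.2 hε3)).and
      (eventually_ge_atTop 0)).exists
  have hM0 : 0 ≤ C * (1 + s) := by positivity
  let g : BoundedContinuousFunction (Rd d) ℝ := BoundedContinuousFunction.ofNormedAddCommGroup
    (fun x => max (-(C * (1 + s))) (min (C * (1 + s)) (h x))) (by fun_prop) (C * (1 + s))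
    (fun x => by rw [Real.norm_eq_abs, abs_le]; constructor <;> grind)
  have hg := ProbabilityMeasure.tendsto_iff_forall_integral_tendsto.1 hw g
  rw [Metric.tendsto_atTop'] at hg
  obtain ⟨N, hN⟩ := hg (ε / 3) hε3
  refine ⟨N, fun n hn => ?_⟩
  have e1 := abs_integral_sub_clamp_le (hs2 n) hc hC hb hs0 hε3.le
    ((mul_le_mul_right (hs n s) _).trans hst.le)
  have e2 := abs_integral_sub_clamp_le hμ2 hc hC hb hs0 hε3.le
    ((mul_le_mul_right (hμ s) _).trans hst.le)
  have e3 := hN n hn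
  simp only [Real.dist_eq, g, BoundedContinuousFunction.coe_ofNormedAddCommGroup] at e3 ⊢
  rw [abs_le] at e1 e2
  rw [abs_lt] at e3 ⊢
  constructor <;> linarith [e1.1, e1.2, e2.1, e2.2, e3.1, e3.2]

/-- A convex function is the pointwise limit of maxima of finitely many affine minorants. These
have linear growth, so the inequalities defining the convex order pass to the limit first along
the sequence of measures, then, by dominated convergence, along the approximation. -/
lemma convexOrder_of_tendsto_s4 {d : ℕ} {ν : Measure (Rd d)} [IsProbabilityMeasure ν]
    (hν : FiniteSecondMoment ν) {μs : ℕ → ProbabilityMeasure (Rd d)}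
    {μ : ProbabilityMeasure (Rd d)}
    (hs2 : ∀ n, FiniteSecondMoment (μs n : Measure (Rd d)))
    (hμ2 : FiniteSecondMoment (μ : Measure (Rd d)))
    (hlim : ∀ h : Rd d → ℝ, Continuous h → ∀ C : ℝ, 0 ≤ C →
      (∀ x, |h x| ≤ C * (1 + ‖x‖ ^ 2)) →
      Tendsto (fun n => ∫ x, h x ∂(μs n : Measure (Rd d))) atTop
        (𝓝 (∫ x, h x ∂(μ : Measure (Rd d)))))
    (hco : ∀ n, ConvexOrder (μs n : Measure (Rd d)) ν) :
    ConvexOrder (μ : Measure (Rd d)) ν := by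
  intro f hf hfμ hfν
  have hfc : Continuous f := continuousOn_univ.1 (hf.continuousOn isOpen_univ)
  obtain ⟨l, c, hle, hsup⟩ :=
    ConvexOn.real_univ_sSup_of_nat_affine_eq hfc.lowerSemicontinuous hf
  set a : ℕ → Rd d → ℝ := fun i x => l i x + c i with ha
  have hale : ∀ i x, a i x ≤ f x := fun i x => hle i x
  have hasup : ∀ x, ⨆ i, a i x = f x := by
    intro x
    have := congrFun hsup x
    rw [iSup_apply] at this
    exact this
  set F : ℕ → Rd d → ℝ := fun k x => partialSups (fun i => a i x) k with hF
  have hF0 : ∀ x, F 0 x = a 0 x := fun x => by simp [hF]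
  have hFs : ∀ k x, F (k + 1) x = max (F k x) (a (k + 1) x) := fun k x => by
    simp [hF, partialSups_add_one]
  have hFle : ∀ k x, F k x ≤ f x := fun k x => partialSups_le _ _ _ fun i _ => hale i x
  have hF0le : ∀ k x, F 0 x ≤ F k x := fun k x => (partialSups _).monotone (Nat.zero_le k)
  have hFlim : ∀ x, Tendsto (fun k => F k x) atTop (𝓝 (f x)) := by
    intro x
    have hbdd : BddAbove (Set.range fun i => a i x) := ⟨f x, by rintro _ ⟨i, rfl⟩; exact hale i x⟩
    have h := tendsto_atTop_ciSup (partialSups fun i => a i x).monotone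
      (by simpa using hbdd)
    rw [ciSup_partialSups_eq hbdd, hasup x] at h
    exact h
  have hFcont : ∀ k, Continuous (F k) := by
    intro k
    induction k with
    | zero => simp only [funext hF0, ha]; fun_prop
    | succ k ih => rw [funext (hFs k)]; simp only [ha]; fun_prop
  have hFconv : ∀ k, ConvexOn ℝ Set.univ (F k) := by
    have haff : ∀ i, ConvexOn ℝ Set.univ (a i) := fun i =>
      ((l i).toLinearMap.convexOn convex_univ).add_const (c i)
    intro k
    induction k with
    | zero => rw [funext hF0]; exact haff 0
    | succ k ih => rw [funext (hFs k)]; exact ih.sup (haff (k + 1))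
  have hFbd : ∀ k, ∃ C : ℝ, 0 ≤ C ∧ ∀ x, |F k x| ≤ C * (1 + ‖x‖ ^ 2) := by
    have haff : ∀ i, ∃ C : ℝ, 0 ≤ C ∧ ∀ x, |a i x| ≤ C * (1 + ‖x‖ ^ 2) := by
      intro i
      refine ⟨‖l i‖ + |c i|, by positivity, fun x => ?_⟩
      have h1 : |l i x| ≤ ‖l i‖ * ‖x‖ := (l i).le_opNorm x
      have h2 : ‖x‖ ≤ 1 + ‖x‖ ^ 2 := by nlinarith [sq_nonneg (‖x‖ - 1)]
      calc |a i x| ≤ |l i x| + |c i| := abs_add_le _ _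
        _ ≤ ‖l i‖ * (1 + ‖x‖ ^ 2) + |c i| * (1 + ‖x‖ ^ 2) := by
            have h3 := mul_le_mul_of_nonneg_left h2 (norm_nonneg (l i))
            nlinarith [mul_nonneg (abs_nonneg (c i)) (sq_nonneg ‖x‖)]
        _ = _ := by ring
    intro k
    induction k with
    | zero => simp only [hF0]; exact haff 0
    | succ k ih =>
      obtain ⟨C, hC, h1⟩ := ih
      obtain ⟨C', hC', h2⟩ := haff (k + 1)
      refine ⟨C + C', by positivity, fun x => ?_⟩
      rw [hFs]
      have h3 := h1 x
      have h4 := h2 x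
      have h5 : 0 ≤ C * (1 + ‖x‖ ^ 2) := by positivity
      have h6 : 0 ≤ C' * (1 + ‖x‖ ^ 2) := by positivity
      exact (abs_max_le_max_abs_abs).trans (max_le (by linarith) (by linarith))
  have hFint : ∀ k, ∀ τ : Measure (Rd d), IsProbabilityMeasure τ → FiniteSecondMoment τ →
      Integrable (F k) τ := by
    intro k τ _ hτ
    obtain ⟨C, hC, h1⟩ := hFbd k
    exact integrable_of_quadratic_bound hτ (hFcont k) h1
  have hdom : ∀ τ : Measure (Rd d), IsProbabilityMeasure τ → FiniteSecondMoment τ →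
      Integrable f τ → Tendsto (fun k => ∫ x, F k x ∂τ) atTop (𝓝 (∫ x, f x ∂τ)) := by
    intro τ _ hτ hfτ
    refine tendsto_integral_of_dominated_convergence (fun x => |F 0 x| + |f x|)
      (fun k => (hFcont k).aestronglyMeasurable) ((hFint 0 τ ‹_› hτ).abs.add hfτ.abs)
      (fun k => Eventually.of_forall fun x => ?_) (Eventually.of_forall hFlim)
    rw [Real.norm_eq_abs, abs_le]
    constructor
    · linarith [hF0le k x, neg_abs_le (F 0 x), abs_nonneg (f x)]
    · linarith [hFle k x, le_abs_self (f x), abs_nonneg (F 0 x)]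
  refine le_of_tendsto_of_tendsto' (hdom μ inferInstance hμ2 hfμ) (hdom ν inferInstance hν hfν)
    fun k => ?_
  obtain ⟨C, hC, h1⟩ := hFbd k
  exact le_of_tendsto' (hlim (F k) (hFcont k) C hC h1) fun n =>
    hco n (F k) (hFconv k) (hFint k _ inferInstance (hs2 n)) (hFint k _ inferInstance hν)

/-! ### Barycenter and variance -/

lemma FiniteSecondMoment.integrable_id {d : ℕ} {μ : Measure (Rd d)} [IsProbabilityMeasure μ]
    (hμ : FiniteSecondMoment μ) : Integrable (fun x : Rd d => x) μ := by
  have h : Integrable (fun x : Rd d => ‖x‖) μ :=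
    integrable_of_quadratic_bound hμ continuous_norm (C := 1) fun x => by
      rw [abs_norm]
      nlinarith [sq_nonneg (‖x‖ - 1)]
  exact (integrable_norm_iff (by fun_prop)).1 h

/-- Measures in convex order share their barycenter: linear functionals and their negatives are
both convex. -/
lemma ConvexOrder.integral_id_eq {d : ℕ} {μ ν : Measure (Rd d)} [IsProbabilityMeasure μ]
    [IsProbabilityMeasure ν] (h : ConvexOrder μ ν) (hμ : FiniteSecondMoment μ)
    (hν : FiniteSecondMoment ν) : ∫ x, x ∂μ = ∫ x, x ∂ν := by
  have hle : ∀ v : Rd d, ⟪v, ∫ x, x ∂μ⟫ ≤ ⟪v, ∫ x, x ∂ν⟫ := by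
    intro v
    rw [← integral_inner hμ.integrable_id, ← integral_inner hν.integrable_id]
    exact h _ ((innerSL ℝ v).toLinearMap.convexOn convex_univ)
      (hμ.integrable_id.const_inner v) (hν.integrable_id.const_inner v)
  refine ext_inner_left ℝ fun v => le_antisymm (hle v) ?_
  have := hle (-v)
  simp only [inner_neg_left] at this
  linarith

lemma Var_eq {d : ℕ} {μ : Measure (Rd d)} [IsProbabilityMeasure μ]
    (hμ : FiniteSecondMoment μ) : Var μ = ∫ x, ‖x‖ ^ 2 ∂μ - ‖∫ x, x ∂μ‖ ^ 2 := by
  have hμ' : Integrable (fun x : Rd d => ‖x‖ ^ 2) μ := hμ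
  set b := ∫ x, x ∂μ with hb
  have hi : Integrable (fun x : Rd d => 2 * ⟪b, x⟫) μ :=
    (hμ.integrable_id.const_inner b).const_mul 2
  have hd : Integrable (fun x : Rd d => ‖x‖ ^ 2 - 2 * ⟪b, x⟫) μ := hμ'.sub hi
  have h1 : ∀ x : Rd d, ‖x - b‖ ^ 2 = ‖x‖ ^ 2 - 2 * ⟪b, x⟫ + ‖b‖ ^ 2 := fun x => by
    rw [norm_sub_sq_real, real_inner_comm]
  rw [Var, ← hb]
  simp only [h1]
  rw [integral_add hd (integrable_const _), integral_sub hμ' hi, integral_const_mul,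
    integral_inner hμ.integrable_id, ← hb, real_inner_self_eq_norm_sq]
  simp
  ring

/-! ### Compactness and existence of a maximizer -/

/-- A sequence of probability measures whose excess second moments vanish uniformly is tight, so
the theorem of Prokhorov gives a weakly convergent subsequence. -/
lemma exists_weak_subseq {d : ℕ} (μs : ℕ → ProbabilityMeasure (Rd d)) {t : ℝ → ENNReal}
    (ht : Tendsto t atTop (𝓝 0)) (hs : ∀ n s, tailMass (μs n : Measure (Rd d)) s ≤ t s) :
    ∃ (μ : ProbabilityMeasure (Rd d)) (φ : ℕ → ℕ), StrictMono φ ∧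
      Tendsto (μs ∘ φ) atTop (𝓝 μ) := by
  have htight : IsTightMeasureSet
      {((μ : ProbabilityMeasure (Rd d)) : Measure (Rd d)) | μ ∈ Set.range μs} := by
    refine isTightMeasureSet_of_tendsto_measure_norm_gt ?_
    have h1 : Tendsto (fun r : ℝ => t (r ^ 2 - 1)) atTop (𝓝 0) :=
      ht.comp (tendsto_atTop_add_const_right _ (-1) (tendsto_pow_atTop two_ne_zero))
    refine tendsto_of_tendsto_of_tendsto_of_le_of_le' tendsto_const_nhds h1
      (Eventually.of_forall fun r => bot_le) ?_
    filter_upwards [eventually_ge_atTop 0] with r hr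
    refine iSup₂_le ?_
    rintro _ ⟨_, ⟨n, rfl⟩, rfl⟩
    refine le_trans ?_ (hs n (r ^ 2 - 1))
    have h2 := mul_meas_ge_le_lintegral (μ := (μs n : Measure (Rd d)))
      (measurable_excess (d := d) (r ^ 2 - 1)) 1
    rw [one_mul] at h2
    refine le_trans (measure_mono fun x hx => ?_) h2
    have hx' : r < ‖x‖ := hx
    rw [Set.mem_ofPred_eq, ← ENNReal.ofReal_one]
    exact ENNReal.ofReal_le_ofReal (by nlinarith)
  obtain ⟨μ, -, φ, hφ, hlim⟩ := (isCompact_closure_of_isTightMeasureSet htight).tendsto_subseq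
    (fun n => subset_closure (Set.mem_range_self n))
  exact ⟨μ, φ, hφ, hlim⟩

/-- If `D ⊆ P₂(ℝ^d)` is `W₂`-closed and `D ∩ M_ν` is non-empty, then the problem
`max { Var(μ) : μ ∈ D, μ ≤_c ν }` attains a solution. -/
theorem stmt_4 {d : ℕ} (ν : Measure (Rd d)) [IsProbabilityMeasure ν]
    (hν2 : FiniteSecondMoment ν)
    (D : Set (Measure (Rd d)))
    (hD : ∀ ρ ∈ D, IsProbabilityMeasure ρ ∧ FiniteSecondMoment ρ)
    (hclosed : ∀ μs : ℕ → Measure (Rd d), (∀ n, μs n ∈ D) →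
      ∀ μ : Measure (Rd d), IsProbabilityMeasure μ → FiniteSecondMoment μ →
        Tendsto (fun n => W2 (μs n) μ) atTop (𝓝 0) → μ ∈ D)
    (hne : ∃ μ ∈ D, ConvexOrder μ ν) :
    ∃ μ ∈ D, ConvexOrder μ ν ∧ ∀ ρ ∈ D, ConvexOrder ρ ν → Var ρ ≤ Var μ := by
  have hbound : ∀ ρ ∈ D, ConvexOrder ρ ν → ∫ x, ‖x‖ ^ 2 ∂ρ ≤ ∫ x, ‖x‖ ^ 2 ∂ν := by
    intro ρ hρ hc
    exact hc _ (convexOn_univ_norm.pow (fun x _ => norm_nonneg x) 2) (hD ρ hρ).2 hν2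
  set S : Set ℝ := (fun ρ : Measure (Rd d) => ∫ x, ‖x‖ ^ 2 ∂ρ) '' {ρ | ρ ∈ D ∧ ConvexOrder ρ ν}
    with hS
  have hSne : S.Nonempty := by
    obtain ⟨μ, h1, h2⟩ := hne
    exact ⟨_, μ, ⟨h1, h2⟩, rfl⟩
  have hSbdd : BddAbove S := ⟨∫ x, ‖x‖ ^ 2 ∂ν, by
    rintro _ ⟨ρ, ⟨h1, h2⟩, rfl⟩
    exact hbound ρ h1 h2⟩
  obtain ⟨u, -, hu, huS⟩ := exists_seq_tendsto_sSup hSne hSbdd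
  choose ρ hρ hρu using huS
  let μs : ℕ → ProbabilityMeasure (Rd d) := fun n => ⟨ρ n, (hD _ (hρ n).1).1⟩
  have hs2 : ∀ n, FiniteSecondMoment (μs n : Measure (Rd d)) := fun n => (hD _ (hρ n).1).2
  have hco : ∀ n, ConvexOrder (μs n : Measure (Rd d)) ν := fun n => (hρ n).2
  have ht := tendsto_tailMass hν2
  have htail : ∀ n s, tailMass (μs n : Measure (Rd d)) s ≤ tailMass ν s :=
    fun n s => (hco n).tailMass_le (hs2 n) hν2 s
  obtain ⟨μ, φ, hφ, hw⟩ := exists_weak_subseq μs ht htail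
  have hμtail : ∀ s, tailMass (μ : Measure (Rd d)) s ≤ tailMass ν s :=
    fun s => tailMass_le_of_tendsto hw fun n => htail (φ n) s
  have hμ2 : FiniteSecondMoment (μ : Measure (Rd d)) :=
    finiteSecondMoment_of_tailMass ((hμtail 0).trans_lt (tailMass_zero_lt_top hν2))
  have hlim : ∀ h : Rd d → ℝ, Continuous h → ∀ C : ℝ, 0 ≤ C →
      (∀ x, |h x| ≤ C * (1 + ‖x‖ ^ 2)) →
      Tendsto (fun n => ∫ x, h x ∂((μs ∘ φ) n : Measure (Rd d))) atTop
        (𝓝 (∫ x, h x ∂(μ : Measure (Rd d)))) := fun h hc C hC hb =>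
    tendsto_integral_of_quadratic_bound hw ht (fun n => htail (φ n)) hμtail
      (fun n => hs2 (φ n)) hμ2 hc hC hb
  have hμco : ConvexOrder (μ : Measure (Rd d)) ν :=
    convexOrder_of_tendsto_s4 hν2 (fun n => hs2 (φ n)) hμ2 hlim (fun n => hco (φ n))
  have hW : Tendsto (fun n => W2 ((μs ∘ φ) n : Measure (Rd d)) μ) atTop (𝓝 0) :=
    tendsto_W2 hw ht (fun n => htail (φ n)) hμtail
  have hμD : (μ : Measure (Rd d)) ∈ D :=
    hclosed (fun n => ((μs ∘ φ) n : Measure (Rd d))) (fun n => (hρ (φ n)).1) μ inferInstance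
      hμ2 hW
  have hmax : ∫ x, ‖x‖ ^ 2 ∂(μ : Measure (Rd d)) = sSup S := by
    have hA := hlim (fun x => ‖x‖ ^ 2) (by fun_prop) 1 zero_le_one
      (fun x => by rw [abs_of_nonneg (by positivity)]; linarith)
    have hB : Tendsto (fun n => ∫ x, ‖x‖ ^ 2 ∂((μs ∘ φ) n : Measure (Rd d))) atTop
        (𝓝 (sSup S)) := by
      have h := hu.comp hφ.tendsto_atTop
      have e : u ∘ φ = fun n => ∫ x, ‖x‖ ^ 2 ∂((μs ∘ φ) n : Measure (Rd d)) :=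
        funext fun n => (hρu (φ n)).symm
      rw [e] at h
      exact h
    exact tendsto_nhds_unique hA hB
  refine ⟨μ, hμD, hμco, fun σ hσ hσco => ?_⟩
  have := (hD σ hσ).1
  have hσ2 := (hD σ hσ).2
  -- the barycenter is that of `ν` on both sides, so only second moments are compared
  rw [Var_eq hσ2, Var_eq hμ2, hσco.integral_id_eq hσ2 hν2, hμco.integral_id_eq hμ2 hν2, hmax]
  exact sub_le_sub_right (le_csSup hSbdd ⟨σ, ⟨hσ, hσco⟩, rfl⟩) _
end
end
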